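/- arXiv:math/0410105 — 6 statements merged into one kernel-verified Lean document; each statement's English description precedes it below -/
import Mathlib

section
/- Let 0 < b_1 ≤ b_2 ≤ ... < c be real numbers and let (X_n) be a centered Gaussian sequence with covariance Cov(X_i, X_j) = c if i = j and Cov(X_i, X_j) = min(b_i, b_j) if i ≠ j. Then (X_n) is c.i.d., i.e., [X_1,...,X_n, X_{n+2}] has the same joint distribution as [X_1,...,X_n, X_{n+1}] for every n ≥ 0. -/
open MeasureTheory ProbabilityTheory Filter

/-- Condition (5): `(X n)` (indexed from 1) is c.i.d., i.e.
`[X 1, …, X n, X (n+2)] ∼ [X 1, …, X n, X (n+1)]` for all `n ≥ 0`. -/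
def IsCIDnat {Ω E : Type*} {mΩ : MeasurableSpace Ω} [MeasurableSpace E]
    (μ : Measure Ω) (X : ℕ → Ω → E) : Prop :=
  ∀ n : ℕ,
    Measure.map (fun ω (i : Fin (n + 1)) =>
        if (i : ℕ) < n then X ((i : ℕ) + 1) ω else X (n + 2) ω) μ
      = Measure.map (fun ω (i : Fin (n + 1)) => X ((i : ℕ) + 1) ω) μ

/-- Let `0 < b 1 ≤ b 2 ≤ … < c` and let `(X n)` be a centered Gaussian sequence with
`Cov (X i) (X j) = c` if `i = j` and `= min (b i) (b j)` if `i ≠ j` (expressed by: every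
finite linear combination `∑ a i * X i` is Gaussian with mean `0` and variance `aᵀ Γ a`).
Then `(X n)` is c.i.d. -/
theorem stmt5 {Ω : Type*} {mΩ : MeasurableSpace Ω}
    (μ : Measure Ω) [IsProbabilityMeasure μ] (X : ℕ → Ω → ℝ)
    (hX : ∀ n, Measurable (X n))
    (b : ℕ → ℝ) (c : ℝ)
    (hb0 : 0 < b 1) (hbmono : ∀ i j, 1 ≤ i → i ≤ j → b i ≤ b j)
    (hbc : ∀ i, 1 ≤ i → b i < c)
    (γ : ℕ → ℕ → ℝ)
    (hγ : ∀ i j, γ i j = if i = j then c else min (b i) (b j))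
    (hGauss : ∀ (n : ℕ) (a : Fin n → ℝ),
      Measure.map (fun ω => ∑ i, a i * X ((i : ℕ) + 1) ω) μ =
        gaussianReal 0 (∑ i, ∑ j, a i * a j * γ ((i : ℕ) + 1) ((j : ℕ) + 1)).toNNReal) :
    IsCIDnat μ X := by
  intro n
  have hm1 : Measurable (fun ω (i : Fin (n + 1)) =>
      if (i : ℕ) < n then X ((i : ℕ) + 1) ω else X (n + 2) ω) := by
    refine measurable_pi_lambda _ fun i => ?_
    by_cases h : (i : ℕ) < n
    · simpa only [h, if_true] using hX _
    · simpa only [h, if_false] using hX _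
  have hm2 : Measurable (fun ω (i : Fin (n + 1)) => X ((i : ℕ) + 1) ω) :=
    measurable_pi_lambda _ fun i => hX _
  have := Measure.isProbabilityMeasure_map (μ := μ) hm1.aemeasurable
  have := Measure.isProbabilityMeasure_map (μ := μ) hm2.aemeasurable
  apply Measure.ext_of_charFunDual
  funext L
  rw [charFunDual_eq_charFun_map_one, charFunDual_eq_charFun_map_one,
    Measure.map_map L.continuous.measurable hm1, Measure.map_map L.continuous.measurable hm2]
  congr 1
  obtain ⟨a, ha⟩ : ∃ a : Fin (n + 1) → ℝ, ∀ x, L x = ∑ i, a i * x i := by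
    refine ⟨fun i => L (Pi.single i 1), fun x => ?_⟩
    conv_lhs => rw [pi_eq_sum_univ' x]
    rw [map_sum]
    refine Finset.sum_congr rfl fun i _ => ?_
    rw [map_smul, smul_eq_mul, mul_comm]
  let a' : Fin (n + 2) → ℝ :=
    Fin.snoc (α := fun _ => ℝ) (Fin.snoc (α := fun _ => ℝ) (fun i : Fin n => a i.castSucc) 0)
      (a (Fin.last n))
  have e1 : (L ∘ fun ω (i : Fin (n + 1)) =>
      if (i : ℕ) < n then X ((i : ℕ) + 1) ω else X (n + 2) ω)
      = fun ω => ∑ i, a' i * X ((i : ℕ) + 1) ω := by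
    funext ω
    simp only [Function.comp, ha, a']
    simp [Fin.sum_univ_castSucc]
  have e2 : (L ∘ fun ω (i : Fin (n + 1)) => X ((i : ℕ) + 1) ω)
      = fun ω => ∑ i, a i * X ((i : ℕ) + 1) ω := by
    funext ω
    simp only [Function.comp, ha]
  rw [e1, e2, hGauss, hGauss]
  congr 2
  have g1 : ∀ i : Fin n, γ ((i : ℕ) + 1) (n + 1 + 1) = γ ((i : ℕ) + 1) (n + 1) := by
    intro i
    have := i.2
    rw [hγ, hγ, if_neg (by omega), if_neg (by omega), min_eq_left, min_eq_left] <;>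
      exact hbmono _ _ (by omega) (by omega)
  have g2 : ∀ i : Fin n, γ (n + 1 + 1) ((i : ℕ) + 1) = γ (n + 1) ((i : ℕ) + 1) := by
    intro i
    have := i.2
    rw [hγ, hγ, if_neg (by omega), if_neg (by omega), min_eq_right, min_eq_right] <;>
      exact hbmono _ _ (by omega) (by omega)
  have g3 : γ (n + 1 + 1) (n + 1 + 1) = γ (n + 1) (n + 1) := by
    rw [hγ, hγ, if_pos rfl, if_pos rfl]
  simp [a', Fin.sum_univ_castSucc, g1, g2, g3]
end

section
/- If (X_n) is G-c.i.d. and f : E → ℝ is measurable with E|f(X_1)| < ∞, then f(X_n) → V_f in the weak topology σ(L¹, L^∞), i.e., E[Z f(X_n)] → E[Z V_f] for every bounded random variable Z. -/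
open MeasureTheory Filter

/-- `(X n)` (indexed from 1) is conditionally identically distributed with respect to `𝒢`. -/
def IsCID {Ω E : Type*} {mΩ : MeasurableSpace Ω} [MeasurableSpace E]
    (μ : Measure Ω) (𝒢 : Filtration ℕ mΩ) (X : ℕ → Ω → E) : Prop :=
  ∀ (f : E → ℝ), Measurable f → (∃ C, ∀ x, |f x| ≤ C) →
    ∀ n k : ℕ, n < k →
      μ[(fun ω => f (X k ω)) | 𝒢 n] =ᵐ[μ] μ[(fun ω => f (X (n + 1) ω)) | 𝒢 n]

lemma cid_abs_condExp_le {Ω : Type*} {m mΩ : MeasurableSpace Ω} (μ : Measure Ω)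
    (A : Ω → ℝ) (C : ℝ) (hA : ∀ ω, |A ω| ≤ C) : ∀ᵐ ω ∂μ, |(μ[A | m]) ω| ≤ |C| := by
  have := ae_bdd_condExp_of_ae_bdd (m := m) (μ := μ) (R := ⟨|C|, abs_nonneg C⟩) (f := A)
    (Eventually.of_forall fun ω => (hA ω).trans (le_abs_self C))
  exact this

lemma cid_swap {Ω : Type*} {m mΩ : MeasurableSpace Ω} (hm : m ≤ mΩ) (μ : Measure Ω)
    [IsProbabilityMeasure μ] (A B : Ω → ℝ) (hA : Measurable A) (C : ℝ) (hC : ∀ ω, |A ω| ≤ C)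
    (hB : Integrable B μ) :
    ∫ ω, A ω * (μ[B | m]) ω ∂μ = ∫ ω, (μ[A | m]) ω * B ω ∂μ := by
  have hAi : Integrable A μ := Integrable.of_bound hA.aestronglyMeasurable C
    (Eventually.of_forall hC)
  have h1 : μ[A * μ[B | m] | m] =ᵐ[μ] μ[A | m] * μ[B | m] :=
    condExp_mul_of_stronglyMeasurable_right stronglyMeasurable_condExp
      (integrable_condExp.bdd_mul hA.aestronglyMeasurable (c := C) (Eventually.of_forall hC)) hAi
  have h2 : μ[μ[A | m] * B | m] =ᵐ[μ] μ[A | m] * μ[B | m] :=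
    condExp_stronglyMeasurable_mul_of_bound hm stronglyMeasurable_condExp hB |C|
      (cid_abs_condExp_le μ A C hC)
  have e1 : ∫ ω, (A * μ[B | m]) ω ∂μ = ∫ ω, (μ[A | m] * B) ω ∂μ := by
    rw [← integral_condExp hm, ← integral_condExp hm (f := μ[A | m] * B)]
    exact integral_congr_ae (h1.trans h2.symm)
  exact e1

lemma cid_L1 {Ω : Type*} {mΩ : MeasurableSpace Ω} (μ : Measure Ω) (F : ℕ → Ω → ℝ) (G : ℕ → Ω → ℝ)
    (hF : ∀ n, Integrable (F n) μ) (hG : ∀ n, Integrable (G n) μ)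
    (h : Tendsto (fun n => eLpNorm (F n - G n) 1 μ) atTop (nhds 0)) :
    Tendsto (fun n => ∫ ω, |F n ω - G n ω| ∂μ) atTop (nhds 0) := by
  have := (ENNReal.tendsto_toReal ENNReal.zero_ne_top).comp h
  refine this.congr fun n => ?_
  have e := integral_norm_eq_lintegral_enorm ((hF n).sub (hG n)).aestronglyMeasurable
  simp only [Function.comp, eLpNorm_one_eq_lintegral_enorm]
  exact e.symm

lemma cid_ui {Ω : Type*} {mΩ : MeasurableSpace Ω} (μ : Measure Ω) [IsProbabilityMeasure μ]
    (𝒢 : ℕ → MeasurableSpace Ω) (Y : ℕ → Ω → ℝ)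
    (hY : ∀ n, Measurable (Y n)) (hYi : ∀ n, Integrable (Y n) μ)
    (hT : ∀ ε > 0, ∃ K : ℝ, 0 ≤ K ∧ ∀ n, ∫ ω, |Y n ω - max (-K) (min K (Y n ω))| ∂μ ≤ ε) :
    UnifIntegrable (fun n => μ[Y n | 𝒢 n]) 1 μ := by
  intro ε hε
  obtain ⟨K, hK, hKY⟩ := hT (ε / 2) (by positivity)
  refine ⟨ε / 2 / (K + 1), by positivity, fun n s hs hμs => ?_⟩
  set T : Ω → ℝ := fun ω => max (-K) (min K (Y n ω)) with hTdef
  have hTb : ∀ ω, |T ω| ≤ K := fun ω => abs_le.2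
    ⟨le_max_left _ _, max_le (by linarith) (min_le_left _ _)⟩
  have hTm : Measurable T := measurable_const.max (measurable_const.min (hY n))
  have hTi : Integrable T μ := Integrable.of_bound hTm.aestronglyMeasurable K
    (Eventually.of_forall hTb)
  have hsplit : μ[Y n | 𝒢 n] =ᵐ[μ] μ[T | 𝒢 n] + μ[Y n - T | 𝒢 n] := by
    have := condExp_add (m := 𝒢 n) hTi ((hYi n).sub hTi)
    simpa using this
  have hind : s.indicator (μ[Y n | 𝒢 n]) =ᵐ[μ]
      s.indicator (μ[T | 𝒢 n]) + s.indicator (μ[Y n - T | 𝒢 n]) := by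
    filter_upwards [hsplit] with ω hω
    by_cases h : ω ∈ s <;> simp [h, hω]
  have hb1 : eLpNorm (s.indicator (μ[T | 𝒢 n])) 1 μ ≤ ENNReal.ofReal (ε / 2) := by
    rw [eLpNorm_indicator_eq_eLpNorm_restrict hs, eLpNorm_one_eq_lintegral_enorm]
    calc ∫⁻ ω in s, ‖(μ[T | 𝒢 n]) ω‖ₑ ∂μ ≤ ∫⁻ ω in s, ENNReal.ofReal K ∂μ := by
          refine lintegral_mono_ae (ae_restrict_of_ae ?_)
          filter_upwards [cid_abs_condExp_le (m := 𝒢 n) μ T K hTb] with ω hω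
          rw [← ofReal_norm_eq_enorm]
          rw [abs_of_nonneg hK] at hω
          exact ENNReal.ofReal_le_ofReal hω
      _ = ENNReal.ofReal K * μ s := by simp
      _ ≤ ENNReal.ofReal K * ENNReal.ofReal (ε / 2 / (K + 1)) := by gcongr
      _ = ENNReal.ofReal (K * (ε / 2 / (K + 1))) := (ENNReal.ofReal_mul hK).symm
      _ ≤ ENNReal.ofReal (ε / 2) := by
          apply ENNReal.ofReal_le_ofReal
          rw [← mul_div_assoc, div_le_iff₀ (by positivity)]
          nlinarith
  have hb2 : eLpNorm (s.indicator (μ[Y n - T | 𝒢 n])) 1 μ ≤ ENNReal.ofReal (ε / 2) := by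
    refine (eLpNorm_indicator_le _).trans ((eLpNorm_one_condExp_le_eLpNorm _).trans ?_)
    rw [eLpNorm_one_eq_lintegral_enorm,
      ← ofReal_integral_norm_eq_lintegral_enorm ((hYi n).sub hTi)]
    exact ENNReal.ofReal_le_ofReal (hKY n)
  rw [eLpNorm_congr_ae hind]
  by_cases hm : 𝒢 n ≤ mΩ
  · refine (eLpNorm_add_le (integrable_condExp.indicator hs).aestronglyMeasurable
      (integrable_condExp.indicator hs).aestronglyMeasurable le_rfl).trans ?_
    refine (add_le_add hb1 hb2).trans ?_
    rw [← ENNReal.ofReal_add (by positivity) (by positivity), add_halves]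
  · simp [condExp_of_not_le hm]

/-- If `(X n)` is `𝒢`-c.i.d. and `E|f (X 1)| < ∞`, then `f (X n) → V_f` in `σ(L¹, L^∞)`:
`E[Z · f (X n)] → E[Z · V_f]` for every bounded (measurable) random variable `Z`. -/
theorem stmt9 {Ω E : Type*} {mΩ : MeasurableSpace Ω} [MeasurableSpace E]
    (μ : Measure Ω) [IsProbabilityMeasure μ] (𝒢 : Filtration ℕ mΩ) (X : ℕ → Ω → E)
    (hadp : ∀ n, 1 ≤ n → Measurable[𝒢 n] (X n))
    (hcid : IsCID μ 𝒢 X)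
    (f : E → ℝ) (hf : Measurable f) (hint : Integrable (fun ω => f (X 1 ω)) μ)
    (V : Ω → ℝ) (hVint : Integrable V μ)
    (hV : ∀ᵐ ω ∂μ, Tendsto (fun n => (μ[(fun ω' => f (X (n + 1) ω')) | 𝒢 n]) ω)
      atTop (nhds (V ω))) :
    ∀ Z : Ω → ℝ, Measurable Z → (∃ C, ∀ ω, |Z ω| ≤ C) →
      Tendsto (fun n => ∫ ω, Z ω * f (X (n + 1) ω) ∂μ) atTop (nhds (∫ ω, Z ω * V ω ∂μ)) := by
  rintro Z hZ ⟨C, hC⟩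
  have hXm : ∀ n, Measurable (X (n + 1)) := fun n =>
    (hadp (n + 1) (by omega)).mono (𝒢.le _) le_rfl
  have hmap : ∀ n, μ.map (X (n + 1)) = μ.map (X 1) := by
    intro n
    ext s hs
    have h := hcid (s.indicator 1) (measurable_one.indicator hs)
      ⟨1, fun x => by by_cases h : x ∈ s <;> simp [h]⟩ 0 (n + 1) (by omega)
    have h2 := integral_congr_ae h
    rw [integral_condExp (𝒢.le 0), integral_condExp (𝒢.le 0)] at h2
    have key : ∀ k, ∫ ω, s.indicator (1 : E → ℝ) (X (k + 1) ω) ∂μ = μ.real (X (k + 1) ⁻¹' s) := by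
      intro k
      rw [← integral_indicator_one (hXm k hs)]
      rfl
    rw [key n, key 0] at h2
    rw [Measure.map_apply (hXm n) hs, Measure.map_apply (hXm 0) hs]
    exact (measureReal_eq_measureReal_iff).1 h2
  have hid : ∀ n, ProbabilityTheory.IdentDistrib (X (n + 1)) (X 1) μ μ := fun n =>
    ⟨(hXm n).aemeasurable, (hXm 0).aemeasurable, hmap n⟩
  set Y : ℕ → Ω → ℝ := fun n ω => f (X (n + 1) ω) with hYdef
  have hYm : ∀ n, Measurable (Y n) := fun n => hf.comp (hXm n)
  have hYi : ∀ n, Integrable (Y n) μ := fun n => ((hid n).comp hf).integrable_iff.2 hint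
  have hT : ∀ ε > 0, ∃ K : ℝ, 0 ≤ K ∧ ∀ n, ∫ ω, |Y n ω - max (-K) (min K (Y n ω))| ∂μ ≤ ε := by
    intro ε hε
    have hlim : Tendsto (fun K : ℕ => ∫ ω, |Y 0 ω - max (-(K : ℝ)) (min (K : ℝ) (Y 0 ω))| ∂μ)
        atTop (nhds (∫ _, (0 : ℝ) ∂μ)) := by
      refine tendsto_integral_of_dominated_convergence (fun ω => |Y 0 ω|) (fun K => ?_)
        (hYi 0).abs (fun K => Eventually.of_forall fun ω => ?_)
        (Eventually.of_forall fun ω => ?_)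
      · have := hYm 0
        exact (by fun_prop : Measurable _).aestronglyMeasurable
      · have hK : (0 : ℝ) ≤ K := K.cast_nonneg
        rw [Real.norm_eq_abs, abs_abs]
        rcases le_total (Y 0 ω) 0 with h | h
        · rw [min_eq_right (h.trans hK), abs_of_nonpos h, abs_of_nonpos]
          · have := max_le (neg_nonpos.2 hK) h
            linarith
          · linarith [le_max_right (-(K : ℝ)) (Y 0 ω)]
        · have h0 := le_min hK h
          rw [max_eq_right (by linarith), abs_of_nonneg h, abs_of_nonneg]
          · linarith
          · linarith [min_le_right (K : ℝ) (Y 0 ω)]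
      · obtain ⟨N, hN⟩ := exists_nat_ge |Y 0 ω|
        refine tendsto_const_nhds.congr' ?_
        filter_upwards [eventually_ge_atTop N] with K hK
        have : |Y 0 ω| ≤ K := hN.trans (by exact_mod_cast hK)
        rw [abs_le] at this
        rw [min_eq_right this.2, max_eq_right this.1, sub_self, abs_zero]
    rw [integral_zero] at hlim
    obtain ⟨K, hK⟩ := (hlim.eventually (ge_mem_nhds hε)).exists
    refine ⟨K, K.cast_nonneg, fun n => ?_⟩
    refine le_of_eq_of_le ?_ hK
    exact ((hid n).comp (u := fun x => |f x - max (-(K : ℝ)) (min (K : ℝ) (f x))|)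
      (by fun_prop)).integral_eq
  -- L¹ convergence of the predictive means
  have hM : Tendsto (fun n => ∫ ω, |(μ[Y n | 𝒢 n]) ω - V ω| ∂μ) atTop (nhds 0) :=
    cid_L1 μ (fun n => μ[Y n | 𝒢 n]) (fun _ => V) (fun n => integrable_condExp) (fun _ => hVint)
      (tendsto_Lp_finite_of_tendsto_ae le_rfl ENNReal.one_ne_top
        (fun n => integrable_condExp.aestronglyMeasurable)
        (memLp_one_iff_integrable.2 hVint) (cid_ui μ (fun n => 𝒢 n) Y hYm hYi hT) hV)
  have hsup : (⨆ n, 𝒢 n) ≤ mΩ := iSup_le fun n => 𝒢.le n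
  set W := μ[Z | ⨆ n, 𝒢 n] with hW
  have hL : Tendsto (fun n => ∫ ω, |(μ[Z | 𝒢 n]) ω - W ω| ∂μ) atTop (nhds 0) :=
    cid_L1 μ (fun n => μ[Z | 𝒢 n]) (fun _ => W) (fun n => integrable_condExp)
      (fun _ => integrable_condExp) (tendsto_eLpNorm_condExp Z)
  have hZY : ∀ n, ∫ ω, Z ω * Y n ω ∂μ = ∫ ω, W ω * Y n ω ∂μ := by
    intro n
    rw [hW, ← cid_swap hsup μ Z (Y n) hZ C hC (hYi n)]
    rw [condExp_of_stronglyMeasurable hsup _ (hYi n)]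
    exact (hf.comp ((hadp (n + 1) (by omega)).mono (le_iSup (fun n => (𝒢 n : MeasurableSpace Ω))
      (n + 1)) le_rfl)).stronglyMeasurable
  have hC0 : 0 ≤ C := by
    obtain ⟨ω⟩ := nonempty_of_isProbabilityMeasure μ
    exact (abs_nonneg _).trans (hC ω)
  have h1 : Tendsto (fun n => ∫ ω, Z ω * (μ[Y n | 𝒢 n]) ω ∂μ) atTop
      (nhds (∫ ω, Z ω * V ω ∂μ)) := by
    rw [tendsto_iff_norm_sub_tendsto_zero]
    refine squeeze_zero (fun _ => norm_nonneg _) (fun n => ?_)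
      (by simpa using hM.const_mul C)
    rw [← integral_sub (integrable_condExp.bdd_mul hZ.aestronglyMeasurable
      (Eventually.of_forall hC)) (hVint.bdd_mul hZ.aestronglyMeasurable (Eventually.of_forall hC)),
      ← integral_const_mul]
    refine norm_integral_le_of_norm_le ((integrable_condExp.sub hVint).abs.const_mul C)
      (Eventually.of_forall fun ω => ?_)
    rw [← mul_sub, norm_mul]
    exact mul_le_mul_of_nonneg_right (hC ω) (abs_nonneg _)
  have hWb := cid_abs_condExp_le (m := ⨆ n, 𝒢 n) μ Z C hC
  have h2 : Tendsto (fun n => ∫ ω, W ω * Y n ω ∂μ - ∫ ω, (μ[Z | 𝒢 n]) ω * Y n ω ∂μ) atTop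
      (nhds 0) := by
    rw [Metric.tendsto_atTop]
    intro ε hε
    obtain ⟨K, hK, hKY⟩ := hT (ε / 2 / (2 * C + 1)) (by positivity)
    have hLK : Tendsto (fun n => K * ∫ ω, |(μ[Z | 𝒢 n]) ω - W ω| ∂μ) atTop (nhds 0) := by
      simpa using hL.const_mul K
    obtain ⟨N, hN⟩ := eventually_atTop.1 (hLK.eventually (gt_mem_nhds (half_pos hε)))
    refine ⟨N, fun n hn => ?_⟩
    have hZb := cid_abs_condExp_le (m := 𝒢 n) μ Z C hC
    have hTi : Integrable (fun ω => max (-K) (min K (Y n ω))) μ := by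
      have := hYm n
      refine Integrable.of_bound (by fun_prop : Measurable _).aestronglyMeasurable K
        (Eventually.of_forall fun ω => abs_le.2
        ⟨le_max_left _ _, max_le (by linarith) (min_le_left _ _)⟩)
    have hWi : Integrable W μ := integrable_condExp
    have hZi : Integrable (μ[Z | 𝒢 n]) μ := integrable_condExp
    rw [dist_zero_right, ← integral_sub
      ((hYi n).bdd_mul hWi.aestronglyMeasurable hWb)
      ((hYi n).bdd_mul hZi.aestronglyMeasurable hZb)]
    have hI1 : Integrable (fun ω => 2 * C * |Y n ω - max (-K) (min K (Y n ω))|) μ :=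
      ((hYi n).sub hTi).abs.const_mul _
    have hI2 : Integrable (fun ω => K * |(μ[Z | 𝒢 n]) ω - W ω|) μ :=
      (hZi.sub hWi).abs.const_mul _
    have hle : ‖∫ ω, (W ω * Y n ω - (μ[Z | 𝒢 n]) ω * Y n ω) ∂μ‖ ≤
        ∫ ω, (2 * C * |Y n ω - max (-K) (min K (Y n ω))| + K * |(μ[Z | 𝒢 n]) ω - W ω|) ∂μ := by
      refine norm_integral_le_of_norm_le (hI1.add hI2) ?_
      filter_upwards [hWb, hZb] with ω hw hz
      rw [abs_of_nonneg hC0] at hw hz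
      have ht : |max (-K) (min K (Y n ω))| ≤ K := abs_le.2
        ⟨le_max_left _ _, max_le (by linarith) (min_le_left _ _)⟩
      generalize max (-K) (min K (Y n ω)) = t at ht
      have e : W ω * Y n ω - (μ[Z | 𝒢 n]) ω * Y n ω =
        (W ω - (μ[Z | 𝒢 n]) ω) * (Y n ω - t) + t * (W ω - (μ[Z | 𝒢 n]) ω) := by ring
      rw [e, Real.norm_eq_abs]
      refine (abs_add_le _ _).trans ?_
      rw [abs_mul, abs_mul]
      refine add_le_add (mul_le_mul_of_nonneg_right ?_ (abs_nonneg _)) ?_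
      · exact (abs_sub _ _).trans (by linarith)
      · rw [abs_sub_comm]
        exact mul_le_mul_of_nonneg_right ht (abs_nonneg _)
    rw [integral_add hI1 hI2, integral_const_mul, integral_const_mul] at hle
    have h3 := mul_le_mul_of_nonneg_left (hKY n) (by positivity : 0 ≤ 2 * C)
    have h4 : 2 * C * (ε / 2 / (2 * C + 1)) ≤ ε / 2 := by
      rw [← mul_div_assoc, div_le_iff₀ (by positivity)]
      nlinarith
    linarith [hN n hn]
  have h3 := h2.add h1
  rw [zero_add] at h3
  refine h3.congr fun n => ?_
  rw [hZY n, cid_swap (𝒢.le n) μ Z (Y n) hZ C hC (hYi n)]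
  ring
end

section
/- Strong law of large numbers for c.i.d. sequences: if (X_n) is c.i.d. and f : E → ℝ is measurable with E|f(X_1)| < ∞, then (1/n) Σ_{i=1}^n f(X_i) → V_f almost surely and in L¹. -/
open MeasureTheory Filter

open ProbabilityTheory in
theorem cid_law {Ω E : Type*} {mΩ : MeasurableSpace Ω} [MeasurableSpace E]
    (μ : Measure Ω) (X : ℕ → Ω → E)
    (hX : ∀ n, Measurable (X n)) (hcid : IsCIDnat μ X) (n : ℕ) :
    IdentDistrib (X (n + 1)) (X 1) μ μ := by
  induction n with
  | zero => exact IdentDistrib.refl (hX _).aemeasurable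
  | succ n ih =>
    refine IdentDistrib.trans ⟨(hX _).aemeasurable, (hX _).aemeasurable, ?_⟩ ih
    have h := congrArg (Measure.map (fun p : Fin (n + 1) → E => p (Fin.last n))) (hcid n)
    rw [Measure.map_map (measurable_pi_apply _), Measure.map_map (measurable_pi_apply _)] at h
    · simpa [Function.comp_def] using h
    · exact measurable_pi_lambda _ fun i => hX _
    · refine measurable_pi_lambda _ fun i => ?_
      split_ifs
      · exact hX _
      · exact hX _

theorem cid_integrable {Ω E : Type*} {mΩ : MeasurableSpace Ω} [MeasurableSpace E]
    (μ : Measure Ω) (X : ℕ → Ω → E)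
    (hX : ∀ n, Measurable (X n)) (hcid : IsCIDnat μ X)
    (g : E → ℝ) (hg : Measurable g) (hint : Integrable (fun ω => g (X 1 ω)) μ) (n : ℕ) :
    Integrable (fun ω => g (X (n + 1) ω)) μ :=
  ((cid_law μ X hX hcid n).comp hg).integrable_iff.2 hint

theorem cid_filtration {Ω E : Type*} {mΩ : MeasurableSpace Ω} [MeasurableSpace E]
    (X : ℕ → Ω → E)
    (𝒢 : Filtration ℕ mΩ)
    (h𝒢 : ∀ n, 𝒢 n = ⨆ i ∈ Set.Icc 1 n, MeasurableSpace.comap (X i) inferInstance) (n : ℕ) :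
    𝒢 n = MeasurableSpace.comap (fun ω (i : Fin n) => X ((i : ℕ) + 1) ω) inferInstance := by
  rw [h𝒢]
  apply le_antisymm
  · refine iSup₂_le fun i hi => ?_
    obtain ⟨h1, h2⟩ := hi
    have : X i = (fun p : Fin n → E => p ⟨i - 1, by omega⟩) ∘
        (fun ω (i : Fin n) => X ((i : ℕ) + 1) ω) := by
      funext ω
      simp [Nat.sub_add_cancel h1]
    rw [this, ← MeasurableSpace.comap_comp]
    exact MeasurableSpace.comap_mono (measurable_pi_apply _).comap_le
  · rw [MeasurableSpace.pi, MeasurableSpace.comap_iSup]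
    refine iSup_le fun i => ?_
    rw [MeasurableSpace.comap_comp]
    exact le_iSup₂_of_le (f := fun j (_ : j ∈ Set.Icc 1 n) =>
      MeasurableSpace.comap (X j) inferInstance) ((i : ℕ) + 1) ⟨by omega, by omega⟩ le_rfl

theorem cid_setIntegral {Ω E : Type*} {mΩ : MeasurableSpace Ω} [MeasurableSpace E]
    (μ : Measure Ω) (X : ℕ → Ω → E)
    (hX : ∀ n, Measurable (X n)) (hcid : IsCIDnat μ X)
    (g : E → ℝ) (hg : Measurable g) (n : ℕ) (B : Set (Fin n → E)) (hB : MeasurableSet B) :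
    ∫ ω in (fun ω (i : Fin n) => X ((i : ℕ) + 1) ω) ⁻¹' B, g (X (n + 2) ω) ∂μ =
    ∫ ω in (fun ω (i : Fin n) => X ((i : ℕ) + 1) ω) ⁻¹' B, g (X (n + 1) ω) ∂μ := by
  have m1 : Measurable (fun ω (i : Fin n) => X ((i : ℕ) + 1) ω) :=
    measurable_pi_lambda _ fun i => hX _
  have m2 : Measurable (fun ω (i : Fin (n + 1)) => X ((i : ℕ) + 1) ω) :=
    measurable_pi_lambda _ fun i => hX _
  have m3 : Measurable (fun ω (i : Fin (n + 1)) =>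
        if (i : ℕ) < n then X ((i : ℕ) + 1) ω else X (n + 2) ω) := by
    refine measurable_pi_lambda _ fun i => ?_
    split_ifs
    · exact hX _
    · exact hX _
  have mr : Measurable (fun (p : Fin (n + 1) → E) (i : Fin n) => p i.castSucc) :=
    measurable_pi_lambda _ fun i => measurable_pi_apply _
  have mG : Measurable (((fun (p : Fin (n + 1) → E) (i : Fin n) => p i.castSucc) ⁻¹' B).indicator
      (fun p => g (p (Fin.last n)))) :=
    (hg.comp (measurable_pi_apply _)).indicator (mr hB)
  have h := congrArg (fun ν => ∫ p, ((fun (p : Fin (n + 1) → E) (i : Fin n) =>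
    p i.castSucc) ⁻¹' B).indicator (fun p => g (p (Fin.last n))) p ∂ν) (hcid n)
  rw [integral_map m3.aemeasurable mG.aestronglyMeasurable,
    integral_map m2.aemeasurable mG.aestronglyMeasurable] at h
  rw [← integral_indicator (m1 hB), ← integral_indicator (m1 hB)]
  have key : ∀ (ω : Ω) (p : Fin (n + 1) → E) (y : E), p (Fin.last n) = y →
      (∀ i : Fin n, p i.castSucc = X ((i : ℕ) + 1) ω) →
      ((fun (p : Fin (n + 1) → E) (i : Fin n) => p i.castSucc) ⁻¹' B).indicator
        (fun p => g (p (Fin.last n))) p =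
      open Classical in if (fun i : Fin n => X ((i : ℕ) + 1) ω) ∈ B then g y else 0 := by
    classical
    intro ω p y h1 h2
    rw [Set.indicator_apply, h1]
    have h3 : (fun i : Fin n => p i.castSucc) = fun i : Fin n => X ((i : ℕ) + 1) ω := funext h2
    rw [← h3]
    by_cases hb : (fun i : Fin n => p i.castSucc) ∈ B
    · rw [if_pos hb]
      exact if_pos hb
    · rw [if_neg hb]
      exact if_neg hb
  have e1 : ∀ (y : ℕ) (ω : Ω), ((fun ω (i : Fin n) => X ((i : ℕ) + 1) ω) ⁻¹' B).indicator
      (fun ω => g (X y ω)) ω =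
      open Classical in if (fun i : Fin n => X ((i : ℕ) + 1) ω) ∈ B then g (X y ω) else 0 := by
    intro y ω
    by_cases hb : (fun i : Fin n => X ((i : ℕ) + 1) ω) ∈ B
    · rw [if_pos hb]
      exact Set.indicator_of_mem (s := (fun ω (i : Fin n) => X ((i : ℕ) + 1) ω) ⁻¹' B) (a := ω) hb (fun ω => g (X y ω))
    · rw [if_neg hb]
      exact Set.indicator_of_notMem (s := (fun ω (i : Fin n) => X ((i : ℕ) + 1) ω) ⁻¹' B) (a := ω) hb (fun ω => g (X y ω))
  calc _ = _ := integral_congr_ae (Eventually.of_forall fun ω =>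
        (e1 (n + 2) ω).trans (key ω _ (X (n + 2) ω) (by simp) (by simp)).symm)
    _ = _ := h
    _ = _ := integral_congr_ae (Eventually.of_forall fun ω =>
        (key ω _ (X (n + 1) ω) (by simp) (by simp)).trans (e1 (n + 1) ω).symm)

theorem cid_condExp {Ω E : Type*} {mΩ : MeasurableSpace Ω} [MeasurableSpace E]
    (μ : Measure Ω) [IsProbabilityMeasure μ] (X : ℕ → Ω → E)
    (hX : ∀ n, Measurable (X n)) (hcid : IsCIDnat μ X)
    (𝒢 : Filtration ℕ mΩ)
    (h𝒢 : ∀ n, 𝒢 n = ⨆ i ∈ Set.Icc 1 n, MeasurableSpace.comap (X i) inferInstance)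
    (g : E → ℝ) (hg : Measurable g) (hint : Integrable (fun ω => g (X 1 ω)) μ) (n : ℕ) :
    μ[(fun ω => g (X (n + 1) ω)) | 𝒢 n] =ᵐ[μ] μ[(fun ω => g (X (n + 2) ω)) | 𝒢 n] := by
  refine ae_eq_condExp_of_forall_setIntegral_eq (𝒢.le n)
    (cid_integrable μ X hX hcid g hg hint (n + 1))
    (fun s _ _ => integrable_condExp.integrableOn) ?_
    stronglyMeasurable_condExp.aestronglyMeasurable
  intro s hs _
  rw [setIntegral_condExp (𝒢.le n) (cid_integrable μ X hX hcid g hg hint n) hs]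
  rw [cid_filtration X 𝒢 h𝒢 n] at hs
  obtain ⟨B, hB, rfl⟩ := hs
  exact (cid_setIntegral μ X hX hcid g hg n B hB).symm

theorem cid_martingale {Ω E : Type*} {mΩ : MeasurableSpace Ω} [MeasurableSpace E]
    (μ : Measure Ω) [IsProbabilityMeasure μ] (X : ℕ → Ω → E)
    (hX : ∀ n, Measurable (X n)) (hcid : IsCIDnat μ X)
    (𝒢 : Filtration ℕ mΩ)
    (h𝒢 : ∀ n, 𝒢 n = ⨆ i ∈ Set.Icc 1 n, MeasurableSpace.comap (X i) inferInstance)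
    (g : E → ℝ) (hg : Measurable g) (hint : Integrable (fun ω => g (X 1 ω)) μ) :
    Martingale (fun n => μ[(fun ω => g (X (n + 1) ω)) | 𝒢 n]) 𝒢 μ := by
  refine martingale_nat (fun n => stronglyMeasurable_condExp) (fun n => integrable_condExp) ?_
  intro n
  refine (cid_condExp μ X hX hcid 𝒢 h𝒢 g hg hint n).trans ?_
  exact (condExp_condExp_of_le (𝒢.mono (Nat.le_succ n)) (𝒢.le _)).symm

theorem cid_tendsto {Ω E : Type*} {mΩ : MeasurableSpace Ω} [MeasurableSpace E]
    (μ : Measure Ω) [IsProbabilityMeasure μ] (X : ℕ → Ω → E)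
    (hX : ∀ n, Measurable (X n)) (hcid : IsCIDnat μ X)
    (𝒢 : Filtration ℕ mΩ)
    (h𝒢 : ∀ n, 𝒢 n = ⨆ i ∈ Set.Icc 1 n, MeasurableSpace.comap (X i) inferInstance)
    (g : E → ℝ) (hg : Measurable g) (hint : Integrable (fun ω => g (X 1 ω)) μ) :
    ∃ L : Ω → ℝ, MemLp L 1 μ ∧
    ∀ᵐ ω ∂μ, Tendsto (fun n => (μ[(fun ω => g (X (n + 1) ω)) | 𝒢 n]) ω) atTop (nhds (L ω)) := by
  have hm := (cid_martingale μ X hX hcid 𝒢 h𝒢 g hg hint).submartingale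
  have hne : eLpNorm (fun ω => g (X 1 ω)) 1 μ ≠ ⊤ := (memLp_one_iff_integrable.2 hint).2.ne
  have hb : ∀ n, eLpNorm (μ[(fun ω => g (X (n + 1) ω)) | 𝒢 n]) 1 μ
      ≤ (eLpNorm (fun ω => g (X 1 ω)) 1 μ).toNNReal := by
    intro n
    rw [ENNReal.coe_toNNReal hne]
    refine (eLpNorm_condExp_le_eLpNorm _ le_rfl).trans ?_
    exact (((cid_law μ X hX hcid n).comp hg).eLpNorm_eq 1).le
  exact ⟨_, hm.memLp_limitProcess hb, hm.ae_tendsto_limitProcess hb⟩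

theorem kronecker_aux (d : ℕ → ℝ) (l : ℝ)
    (h : Tendsto (fun n => ∑ k ∈ Finset.range n, d k / ((k : ℝ) + 1)) atTop (nhds l)) :
    Tendsto (fun n : ℕ => (n : ℝ)⁻¹ * ∑ k ∈ Finset.range n, d k) atTop (nhds 0) := by
  have key : ∀ n : ℕ, ∑ k ∈ Finset.range n, d k =
      n * (∑ k ∈ Finset.range n, d k / ((k : ℝ) + 1)) -
        ∑ j ∈ Finset.range n, ∑ k ∈ Finset.range j, d k / ((k : ℝ) + 1) := by
    intro n
    induction n with
    | zero => simp
    | succ n ih =>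
      simp only [Finset.sum_range_succ] at ih ⊢
      rw [ih]
      have : (n : ℝ) + 1 ≠ 0 := by positivity
      push_cast
      field_simp
      ring
  have h2 := h.sub h.cesaro
  rw [sub_self] at h2
  refine h2.congr' ?_
  filter_upwards [eventually_gt_atTop 0] with n hn
  have : (n : ℝ) ≠ 0 := by positivity
  rw [key n]
  field_simp

theorem mart_slln {Ω : Type*} {mΩ : MeasurableSpace Ω}
    (μ : Measure Ω) [IsProbabilityMeasure μ] (𝒢 : Filtration ℕ mΩ)
    (Z : ℕ → Ω → ℝ) (hZm : ∀ k, StronglyMeasurable[𝒢 (k + 1)] (Z k))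
    (hZ : ∀ k, MemLp (Z k) 2 μ) (C : ℝ)
    (hC : ∀ n, ∑ k ∈ Finset.range n, (∫ ω, Z k ω ^ 2 ∂μ) / ((k : ℝ) + 1) ^ 2 ≤ C) :
    ∀ᵐ ω ∂μ, Tendsto (fun n : ℕ => (n : ℝ)⁻¹ * ∑ k ∈ Finset.range n,
      (Z k ω - (μ[Z k | 𝒢 k]) ω)) atTop (nhds 0) := by
  set D : ℕ → Ω → ℝ := fun k => Z k - μ[Z k | 𝒢 k] with hD
  have hZi : ∀ k, Integrable (Z k) μ := fun k => (hZ k).integrable one_le_two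
  have hDm : ∀ k, StronglyMeasurable[𝒢 (k + 1)] (D k) := fun k =>
    (hZm k).sub (stronglyMeasurable_condExp.mono (𝒢.mono (Nat.le_succ k)))
  have hDL : ∀ k, MemLp (D k) 2 μ := fun k => (hZ k).sub ((hZ k).condExp one_le_two)
  have hDi : ∀ k, Integrable (D k) μ := fun k => (hDL k).integrable one_le_two
  have hD0 : ∀ k, μ[D k | 𝒢 k] =ᵐ[μ] 0 := by
    intro k
    refine (condExp_sub (hZi k) integrable_condExp _).trans ?_
    have h2 : μ[μ[Z k | 𝒢 k] | 𝒢 k] = μ[Z k | 𝒢 k] :=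
      condExp_of_stronglyMeasurable (𝒢.le k) stronglyMeasurable_condExp integrable_condExp
    rw [h2, sub_self]
  have hD2 : ∀ k, ∫ ω, D k ω ^ 2 ∂μ ≤ ∫ ω, Z k ω ^ 2 ∂μ := by
    intro k
    have h1 := integral_mono_ae ProbabilityTheory.integrable_condVar integrable_condExp
      (ProbabilityTheory.condVar_ae_le_condExp_sq (𝒢.le k) (hZ k))
    rw [ProbabilityTheory.condVar, integral_condExp (𝒢.le k), integral_condExp (𝒢.le k)] at h1
    exact h1
  set W : ℕ → Ω → ℝ := fun n => ∑ k ∈ Finset.range n, ((k : ℝ) + 1)⁻¹ • D k with hW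
  have hWm : ∀ n, StronglyMeasurable[𝒢 n] (W n) := by
    intro n
    refine Finset.stronglyMeasurable_sum _ fun k hk => ?_
    exact ((hDm k).mono (𝒢.mono (Finset.mem_range.1 hk))).const_smul _
  have hWL : ∀ n, MemLp (W n) 2 μ := fun n =>
    memLp_finsetSum' _ fun k _ => (hDL k).const_smul _
  have hWi : ∀ n, Integrable (W n) μ := fun n => (hWL n).integrable one_le_two
  have hWs : ∀ n, W (n + 1) = W n + ((n : ℝ) + 1)⁻¹ • D n := fun n => by
    simp only [hW, Finset.sum_range_succ]
  have hmart : Martingale W 𝒢 μ := by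
    refine martingale_nat hWm hWi fun n => ?_
    rw [hWs]
    have h1 := condExp_add (hWi n) ((hDi n).smul ((n : ℝ) + 1)⁻¹) (𝒢 n)
    have h2 := condExp_smul (μ := μ) ((n : ℝ) + 1)⁻¹ (D n) (𝒢 n)
    rw [condExp_of_stronglyMeasurable (𝒢.le n) (hWm n) (hWi n)] at h1
    filter_upwards [h1, h2, hD0 n] with ω a b c
    rw [a, Pi.add_apply, b, Pi.smul_apply, c]
    simp
  have hW2 : ∀ n, ∫ ω, W n ω ^ 2 ∂μ ≤ C := by
    intro n
    refine le_trans ?_ (hC n)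
    induction n with
    | zero => simp [hW]
    | succ n ih =>
      rw [Finset.sum_range_succ]
      have hWD : Integrable (W n * D n) μ := (hWL n).integrable_mul (hDL n)
      have hcross : ∫ ω, (W n * D n) ω ∂μ = 0 := by
        rw [← integral_condExp (𝒢.le n)]
        refine integral_eq_zero_of_ae ?_
        filter_upwards [condExp_mul_of_stronglyMeasurable_left (hWm n) hWD (hDi n), hD0 n]
          with ω a b
        rw [a, Pi.mul_apply, b]
        simp
      have hexp : ∫ ω, W (n + 1) ω ^ 2 ∂μ = ∫ ω, W n ω ^ 2 ∂μ
          + 2 * ((n : ℝ) + 1)⁻¹ * ∫ ω, (W n * D n) ω ∂μ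
          + (((n : ℝ) + 1)⁻¹) ^ 2 * ∫ ω, D n ω ^ 2 ∂μ := by
        rw [← integral_const_mul, ← integral_const_mul, ← integral_add, ← integral_add]
        · refine integral_congr_ae (Eventually.of_forall fun ω => ?_)
          simp only [hWs, Pi.add_apply, Pi.smul_apply, Pi.mul_apply, smul_eq_mul]
          ring
        · exact (hWL n).integrable_sq.add (hWD.const_mul _)
        · exact (hDL n).integrable_sq.const_mul _
        · exact (hWL n).integrable_sq
        · exact hWD.const_mul _
      rw [hexp, hcross, mul_zero, add_zero]
      refine add_le_add ih ?_
      rw [div_eq_inv_mul, inv_pow]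
      exact mul_le_mul_of_nonneg_left (hD2 n) (by positivity)
  have hC1 : ∀ n, eLpNorm (W n) 1 μ ≤ (C + 1).toNNReal := by
    intro n
    rw [eLpNorm_one_eq_lintegral_enorm, ← ofReal_integral_norm_eq_lintegral_enorm (hWi n)]
    refine ENNReal.ofReal_le_ofReal ?_
    calc ∫ ω, ‖W n ω‖ ∂μ ≤ ∫ ω, (W n ω ^ 2 + 1) ∂μ := by
          refine integral_mono (hWi n).norm ((hWL n).integrable_sq.add (integrable_const _)) ?_
          intro ω
          simp only [Real.norm_eq_abs]
          nlinarith [sq_abs (W n ω), sq_nonneg (|W n ω| - 1), abs_nonneg (W n ω)]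
      _ = ∫ ω, W n ω ^ 2 ∂μ + 1 := by
          rw [integral_add (hWL n).integrable_sq (integrable_const _)]
          simp
      _ ≤ C + 1 := by linarith [hW2 n]
  filter_upwards [hmart.submartingale.ae_tendsto_limitProcess hC1] with ω hω
  refine kronecker_aux (fun k => Z k ω - (μ[Z k | 𝒢 k]) ω) _ (hω.congr fun n => ?_)
  simp [hW, hD, div_eq_inv_mul]

theorem prob_sum_aux {Ω : Type*} {mΩ : MeasurableSpace Ω}
    (μ : Measure Ω) [IsProbabilityMeasure μ] (Y : Ω → ℝ) (hY : Integrable Y μ) :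
    (∑' j : ℕ, μ {ω | (j : ℝ) < |Y ω|}) ≠ ⊤ := by
  let _ : MeasureSpace Ω := ⟨μ⟩
  have : IsProbabilityMeasure (volume : Measure Ω) := ‹IsProbabilityMeasure μ›
  exact (ProbabilityTheory.tsum_prob_mem_Ioi_lt_top (X := fun ω => |Y ω|) hY.abs
    (fun ω => abs_nonneg _)).ne

theorem var_sum_aux {Ω : Type*} {mΩ : MeasurableSpace Ω}
    (μ : Measure Ω) [IsProbabilityMeasure μ] (Y : Ω → ℝ) (hY : Integrable Y μ) (n : ℕ) :
    ∑ k ∈ Finset.range n,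
      (∫ ω, (if |Y ω| ≤ ((k + 1 : ℕ) : ℝ) then Y ω else 0) ^ 2 ∂μ) / ((k : ℝ) + 1) ^ 2
      ≤ 2 * ∫ ω, |Y ω| ∂μ := by
  let _ : MeasureSpace Ω := ⟨μ⟩
  have : IsProbabilityMeasure (volume : Measure Ω) := ‹IsProbabilityMeasure μ›
  have h := ProbabilityTheory.sum_variance_truncation_le (X := fun ω => |Y ω|) hY.abs
    (fun ω => abs_nonneg _) (n + 1)
  rw [Finset.sum_range_succ'] at h
  simp only [Nat.cast_zero, ne_eq, OfNat.ofNat_ne_zero, not_false_eq_true, zero_pow, inv_zero,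
    zero_mul, add_zero] at h
  refine le_trans (le_of_eq ?_) h
  refine Finset.sum_congr rfl fun k _ => ?_
  rw [div_eq_inv_mul, Nat.cast_add, Nat.cast_one]
  congr 1
  refine integral_congr_ae (Eventually.of_forall fun ω => ?_)
  simp only [Pi.pow_apply]
  rw [ProbabilityTheory.truncation_eq_of_nonneg (fun ω => abs_nonneg _)]
  simp only [Function.comp, Set.indicator, Set.mem_Ioc, id]
  by_cases h0 : Y ω = 0
  · simp [h0]
  · have : 0 < |Y ω| := abs_pos.2 h0
    simp only [this, true_and]
    split_ifs <;> simp

theorem cid_tail {Ω E : Type*} {mΩ : MeasurableSpace Ω} [MeasurableSpace E]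
    (μ : Measure Ω) [IsProbabilityMeasure μ] (X : ℕ → Ω → E)
    (hX : ∀ n, Measurable (X n)) (hcid : IsCIDnat μ X)
    (𝒢 : Filtration ℕ mΩ)
    (h𝒢 : ∀ n, 𝒢 n = ⨆ i ∈ Set.Icc 1 n, MeasurableSpace.comap (X i) inferInstance)
    (f : E → ℝ) (hf : Measurable f) (hint : Integrable (fun ω => f (X 1 ω)) μ)
    (t : ℕ → E → ℝ) (ht : t = fun (c : ℕ) x => if |f x| ≤ (c : ℝ) then 0 else f x) :
    ∀ᵐ ω ∂μ, Tendsto (fun k => (μ[(fun ω' => t (k + 1) (X (k + 1) ω')) | 𝒢 k]) ω)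
      atTop (nhds 0) := by
  have htm : ∀ c, Measurable (t c) := by
    intro c
    rw [ht]
    exact Measurable.ite (measurableSet_le hf.abs measurable_const) measurable_const hf
  have htf : ∀ c x, |t c x| ≤ |f x| := by
    intro c x
    simp only [ht]
    split_ifs <;> simp
  have hti : ∀ c, Integrable (fun ω => t c (X 1 ω)) μ := fun c =>
    hint.mono ((htm c).comp (hX 1)).aestronglyMeasurable
      (Eventually.of_forall fun ω => htf c _)
  have htanti : ∀ c d : ℕ, c ≤ d → ∀ x, |t d x| ≤ |t c x| := by
    intro c d hcd x
    have : (c : ℝ) ≤ d := by exact_mod_cast hcd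
    simp only [ht]
    split_ifs with h1 h2 h2
    · simp
    · simp
    · exact absurd (h2.trans this) h1
    · simp
  have htii : ∀ c k, Integrable (fun ω => t c (X (k + 1) ω)) μ := fun c k =>
    cid_integrable μ X hX hcid (t c) (htm c) (hti c) k
  set R : ℕ → Ω → ℝ := fun k => μ[(fun ω' => t (k + 1) (X (k + 1) ω')) | 𝒢 k] with hR
  set N : ℕ → ℕ → Ω → ℝ := fun c k => μ[(fun ω' => |t c (X (k + 1) ω')|) | 𝒢 k] with hN
  have hRm : ∀ k, Measurable (R k) := fun k =>
    (stronglyMeasurable_condExp.mono (𝒢.le k)).measurable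
  have hNm : ∀ c k, Measurable (N c k) := fun c k =>
    (stronglyMeasurable_condExp.mono (𝒢.le k)).measurable
  have hRN : ∀ c k, c ≤ k → ∀ᵐ ω ∂μ, |R k ω| ≤ N c k ω := by
    intro c k hck
    have h1 : R k ≤ᵐ[μ] N c k := condExp_mono (htii _ _) (htii _ _).abs
      (Eventually.of_forall fun ω => (le_abs_self _).trans (htanti c (k + 1) (by omega) _))
    have h2 : μ[-(fun ω' => |t c (X (k + 1) ω')|) | 𝒢 k] ≤ᵐ[μ] R k :=
      condExp_mono (htii _ _).abs.neg (htii _ _)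
      (Eventually.of_forall fun ω => by
        have := (neg_abs_le (t (k + 1) (X (k + 1) ω)))
        have h3 := htanti c (k + 1) (by omega) (X (k + 1) ω)
        simp only [Pi.neg_apply]
        linarith)
    have h3 := condExp_neg (μ := μ) (fun ω' => |t c (X (k + 1) ω')|) (𝒢 k)
    filter_upwards [h1, h2, h3] with ω a b d
    rw [abs_le]
    refine ⟨?_, a⟩
    rw [d] at b
    exact b
  have hNint : ∀ c k, ∫⁻ ω, ENNReal.ofReal (N c k ω) ∂μ
      = ENNReal.ofReal (∫ ω, |t c (X 1 ω)| ∂μ) := by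
    intro c k
    rw [← ofReal_integral_eq_lintegral_ofReal integrable_condExp
      (condExp_nonneg (Eventually.of_forall fun ω => abs_nonneg _)), integral_condExp (𝒢.le k)]
    congr 1
    exact ((cid_law μ X hX hcid k).comp (htm c).abs).integral_eq
  have hlim : ∀ c, ∫⁻ ω, limsup (fun k => ‖R k ω‖ₑ) atTop ∂μ
      ≤ ENNReal.ofReal (∫ ω, |t c (X 1 ω)| ∂μ) := by
    intro c
    obtain ⟨L, -, hL⟩ := cid_tendsto μ X hX hcid 𝒢 h𝒢 (fun x => |t c x|) (htm c).abs (hti c).abs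
    have hall : ∀ᵐ ω ∂μ, ∀ k, c ≤ k → |R k ω| ≤ N c k ω := by
      rw [ae_all_iff]
      intro k
      by_cases hck : c ≤ k
      · filter_upwards [hRN c k hck] with ω h _ using h
      · exact Eventually.of_forall fun ω h => absurd h hck
    calc ∫⁻ ω, limsup (fun k => ‖R k ω‖ₑ) atTop ∂μ
        ≤ ∫⁻ ω, liminf (fun k => ENNReal.ofReal (N c k ω)) atTop ∂μ := by
          refine lintegral_mono_ae ?_
          filter_upwards [hL, hall] with ω h1 h2
          have h3 := (ENNReal.continuous_ofReal.tendsto _).comp h1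
          have h4 : liminf (fun k => ENNReal.ofReal (N c k ω)) atTop = ENNReal.ofReal (L ω) :=
            h3.liminf_eq
          have h5 : limsup (fun k => ENNReal.ofReal (N c k ω)) atTop = ENNReal.ofReal (L ω) :=
            h3.limsup_eq
          rw [h4, ← h5]
          refine limsup_le_limsup ?_
          filter_upwards [eventually_ge_atTop c] with k hk
          rw [Real.enorm_eq_ofReal_abs]
          exact ENNReal.ofReal_le_ofReal (h2 k hk)
      _ ≤ liminf (fun k => ∫⁻ ω, ENNReal.ofReal (N c k ω) ∂μ) atTop :=
          lintegral_liminf_le fun k => (hNm c k).ennreal_ofReal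
      _ = ENNReal.ofReal (∫ ω, |t c (X 1 ω)| ∂μ) := by
          simp only [hNint]
          exact liminf_const _
  have h0 : Tendsto (fun c => ∫ ω, |t c (X 1 ω)| ∂μ) atTop (nhds 0) := by
    have := tendsto_integral_of_dominated_convergence (μ := μ)
      (F := fun c ω => |t c (X 1 ω)|) (f := fun _ => (0 : ℝ)) (fun ω => |f (X 1 ω)|)
      (fun c => (hti c).abs.1) hint.abs
      (fun c => Eventually.of_forall fun ω => by
        rw [Real.norm_eq_abs, abs_abs]; exact htf c _)
      (Eventually.of_forall fun ω => by
        refine tendsto_const_nhds.congr' ?_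
        obtain ⟨m, hm⟩ := exists_nat_ge |f (X 1 ω)|
        filter_upwards [eventually_ge_atTop m] with c hc
        have : |f (X 1 ω)| ≤ (c : ℝ) := hm.trans (by exact_mod_cast hc)
        simp [ht, this])
    simpa using this
  have hzero : ∫⁻ ω, limsup (fun k => ‖R k ω‖ₑ) atTop ∂μ = 0 := by
    refine le_antisymm ?_ bot_le
    have := (ENNReal.continuous_ofReal.tendsto _).comp h0
    rw [ENNReal.ofReal_zero] at this
    exact ge_of_tendsto' this hlim
  rw [lintegral_eq_zero_iff (Measurable.limsup fun k => (hRm k).enorm)] at hzero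
  filter_upwards [hzero] with ω hω
  have h1 : Tendsto (fun k => ‖R k ω‖ₑ) atTop (nhds 0) :=
    tendsto_of_le_liminf_of_limsup_le bot_le (le_of_eq hω)
  exact tendsto_zero_iff_enorm_tendsto_zero.2 h1

theorem cid_ae {Ω E : Type*} {mΩ : MeasurableSpace Ω} [MeasurableSpace E]
    (μ : Measure Ω) [IsProbabilityMeasure μ] (X : ℕ → Ω → E)
    (hX : ∀ n, Measurable (X n)) (hcid : IsCIDnat μ X)
    (𝒢 : Filtration ℕ mΩ)
    (h𝒢 : ∀ n, 𝒢 n = ⨆ i ∈ Set.Icc 1 n, MeasurableSpace.comap (X i) inferInstance)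
    (f : E → ℝ) (hf : Measurable f) (hint : Integrable (fun ω => f (X 1 ω)) μ)
    (V : Ω → ℝ)
    (hV : ∀ᵐ ω ∂μ, Tendsto (fun n => (μ[(fun ω' => f (X (n + 1) ω')) | 𝒢 n]) ω)
      atTop (nhds (V ω))) :
    ∀ᵐ ω ∂μ, Tendsto (fun n : ℕ => (n : ℝ)⁻¹ * ∑ i ∈ Finset.range n, f (X (i + 1) ω))
      atTop (nhds (V ω)) := by
  set t : ℕ → E → ℝ := fun (c : ℕ) x => if |f x| ≤ (c : ℝ) then 0 else f x with ht
  set h : ℕ → E → ℝ := fun (c : ℕ) x => if |f x| ≤ (c : ℝ) then f x else 0 with hh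
  have hhm : ∀ c, Measurable (h c) := fun c =>
    Measurable.ite (measurableSet_le hf.abs measurable_const) hf measurable_const
  have htm : ∀ c, Measurable (t c) := fun c =>
    Measurable.ite (measurableSet_le hf.abs measurable_const) measurable_const hf
  have hfi : ∀ k, Integrable (fun ω => f (X (k + 1) ω)) μ :=
    cid_integrable μ X hX hcid f hf hint
  have hti : ∀ c k, Integrable (fun ω => t c (X (k + 1) ω)) μ := fun c k =>
    (hfi k).mono ((htm c).comp (hX _)).aestronglyMeasurable
      (Eventually.of_forall fun ω => by
        simp only [ht]
        split_ifs <;> simp)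
  set Z : ℕ → Ω → ℝ := fun k ω => h (k + 1) (X (k + 1) ω) with hZ
  have hXm : ∀ k, Measurable[𝒢 (k + 1)] (X (k + 1)) := by
    intro k
    rw [measurable_iff_comap_le, h𝒢]
    exact le_iSup₂_of_le (f := fun j (_ : j ∈ Set.Icc 1 (k + 1)) =>
      MeasurableSpace.comap (X j) inferInstance) (k + 1) ⟨by omega, le_rfl⟩ le_rfl
  have hZ2 : ∀ k, MemLp (Z k) 2 μ := by
    intro k
    refine MemLp.of_bound ((hhm _).comp (hX _)).aestronglyMeasurable ((k + 1 : ℕ) : ℝ)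
      (Eventually.of_forall fun ω => ?_)
    simp only [hZ, hh, Real.norm_eq_abs]
    split_ifs with h1
    · exact h1
    · simp only [abs_zero]; positivity
  have A := mart_slln μ 𝒢 Z (fun k => ((hhm _).comp (hXm k)).stronglyMeasurable) hZ2
    (2 * ∫ ω, |f (X 1 ω)| ∂μ) (fun n => by
      refine le_trans (le_of_eq ?_) (var_sum_aux μ (fun ω => f (X 1 ω)) hint n)
      refine Finset.sum_congr rfl fun k _ => ?_
      congr 1
      exact ((cid_law μ X hX hcid k).comp ((hhm (k + 1)).pow_const 2)).integral_eq)
  have B := cid_tail μ X hX hcid 𝒢 h𝒢 f hf hint t ht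
  have Csum : (∑' j : ℕ, μ {ω | ((j + 1 : ℕ) : ℝ) < |f (X (j + 1) ω)|}) ≠ ⊤ := by
    refine ne_top_of_le_ne_top (prob_sum_aux μ _ hint) (ENNReal.tsum_le_tsum fun j => ?_)
    have h1 := ((cid_law μ X hX hcid j).comp hf.abs).measure_mem_eq
      (measurableSet_Ioi (a := ((j + 1 : ℕ) : ℝ)))
    refine (le_of_eq h1).trans (measure_mono fun ω hω => ?_)
    have h2 : ((j + 1 : ℕ) : ℝ) < |f (X 1 ω)| := hω
    refine lt_of_le_of_lt ?_ h2
    push_cast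
    linarith
  have Cae := ae_eventually_notMem Csum
  have D : ∀ᵐ ω ∂μ, ∀ k, (μ[Z k | 𝒢 k]) ω = (μ[(fun ω' => f (X (k + 1) ω')) | 𝒢 k]) ω
      - (μ[(fun ω' => t (k + 1) (X (k + 1) ω')) | 𝒢 k]) ω := by
    rw [ae_all_iff]
    intro k
    have : Z k = (fun ω' => f (X (k + 1) ω')) - (fun ω' => t (k + 1) (X (k + 1) ω')) := by
      funext ω
      simp only [hZ, hh, ht, Pi.sub_apply]
      split_ifs <;> simp
    rw [this]
    exact condExp_sub (hfi k) (hti _ k) _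
  filter_upwards [A, B, Cae, D, hV] with ω a b c d v
  have e1 : Tendsto (fun k => (μ[Z k | 𝒢 k]) ω) atTop (nhds (V ω)) := by
    have := v.sub b
    rw [sub_zero] at this
    exact this.congr fun k => (d k).symm
  have e2 : Tendsto (fun k => f (X (k + 1) ω) - Z k ω) atTop (nhds 0) := by
    refine tendsto_const_nhds.congr' ?_
    filter_upwards [c] with k hk
    have : |f (X (k + 1) ω)| ≤ ((k + 1 : ℕ) : ℝ) := not_lt.1 hk
    simp only [hZ, hh, if_pos this, sub_self]
  have e3 := (a.add e1.cesaro).add e2.cesaro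
  rw [zero_add, add_zero] at e3
  refine e3.congr fun n => ?_
  rw [← mul_add, ← mul_add, ← Finset.sum_add_distrib, ← Finset.sum_add_distrib]
  congr 1
  refine Finset.sum_congr rfl fun k _ => ?_
  ring

/-- SLLN for c.i.d. sequences: if `(X n)` is c.i.d. and `E|f (X 1)| < ∞`, then
`(1/n) ∑_{i=1}^n f (X i) → V_f` a.s. and in `L¹`, where `V_f` is the a.s. limit of the
martingale `E[f (X (n+1)) | σ(X 1, …, X n)]`. -/
theorem stmt10 {Ω E : Type*} {mΩ : MeasurableSpace Ω} [MeasurableSpace E]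
    (μ : Measure Ω) [IsProbabilityMeasure μ] (X : ℕ → Ω → E)
    (hX : ∀ n, Measurable (X n))
    (hcid : IsCIDnat μ X)
    (𝒢 : Filtration ℕ mΩ)
    (h𝒢 : ∀ n, 𝒢 n = ⨆ i ∈ Set.Icc 1 n, MeasurableSpace.comap (X i) inferInstance)
    (f : E → ℝ) (hf : Measurable f) (hint : Integrable (fun ω => f (X 1 ω)) μ)
    (V : Ω → ℝ)
    (hV : ∀ᵐ ω ∂μ, Tendsto (fun n => (μ[(fun ω' => f (X (n + 1) ω')) | 𝒢 n]) ω)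
      atTop (nhds (V ω))) :
    (∀ᵐ ω ∂μ, Tendsto (fun n => (∑ i ∈ Finset.Icc 1 n, f (X i ω)) / (n : ℝ))
      atTop (nhds (V ω))) ∧
    Tendsto (fun n => ∫ ω, |(∑ i ∈ Finset.Icc 1 n, f (X i ω)) / (n : ℝ) - V ω| ∂μ)
      atTop (nhds 0) := by
  have hsum : ∀ (n : ℕ) ω, (∑ i ∈ Finset.Icc 1 n, f (X i ω)) / (n : ℝ)
      = (n : ℝ)⁻¹ * ∑ i ∈ Finset.range n, f (X (i + 1) ω) := by
    intro n ω
    rw [div_eq_inv_mul, Finset.range_eq_Ico,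
      Finset.sum_Ico_add' (fun i => f (X i ω)) 0 n 1]
    rfl
  have hae := cid_ae μ X hX hcid 𝒢 h𝒢 f hf hint V hV
  have hVL : MemLp V 1 μ := by
    obtain ⟨L, hL, hL2⟩ := cid_tendsto μ X hX hcid 𝒢 h𝒢 f hf hint
    refine (memLp_congr_ae ?_).1 hL
    filter_upwards [hL2, hV] with ω a b using tendsto_nhds_unique a b
  simp only [hsum]
  refine ⟨hae, ?_⟩
  have hfm : ∀ i, Measurable (fun ω => f (X (i + 1) ω)) := fun i => hf.comp (hX _)
  have hui : UniformIntegrable (fun i ω => f (X (i + 1) ω)) 1 μ :=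
    ProbabilityTheory.MemLp.uniformIntegrable_of_identDistrib (j := 0) le_rfl ENNReal.one_ne_top
      (memLp_one_iff_integrable.2 hint) (fun i => (cid_law μ X hX hcid i).comp hf)
  have hav := (uniformIntegrable_average le_rfl hui).unifIntegrable
  have heq : (fun (n : ℕ) => (n : ℝ)⁻¹ • (∑ i ∈ Finset.range n, fun ω => f (X (i + 1) ω)))
      = fun (n : ℕ) ω => (n : ℝ)⁻¹ * ∑ i ∈ Finset.range n, f (X (i + 1) ω) := by
    funext n ω
    simp [Finset.sum_apply]
  rw [heq] at hav
  have hm : ∀ n : ℕ, Measurable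
      (fun ω => (n : ℝ)⁻¹ * ∑ i ∈ Finset.range n, f (X (i + 1) ω)) := fun n =>
    (Finset.measurable_sum _ fun i _ => hfm i).const_mul _
  have hlim := tendsto_Lp_finite_of_tendsto_ae le_rfl ENNReal.one_ne_top
    (fun n => (hm n).aestronglyMeasurable) hVL hav hae
  have h2 := (ENNReal.tendsto_toReal ENNReal.zero_ne_top).comp hlim
  rw [ENNReal.toReal_zero] at h2
  refine h2.congr fun n => ?_
  simp only [Function.comp]
  rw [eLpNorm_one_eq_lintegral_enorm, ← integral_norm_eq_lintegral_enorm
    ((hm n).aestronglyMeasurable.sub hVL.1)]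
  rfl
end

section
/- Generalized SLLN for products: if (X_n) is c.i.d., f_1, ..., f_k are measurable real functions on E with E|f_j(X_1)| < ∞ for all j and f_1, ..., f_{k-1} bounded, then (1/n) Σ_{i=0}^{n-1} ∏_{j=1}^k f_j(X_{i+j}) → ∏_{j=1}^k V_{f_j} almost surely and in L¹. -/
open MeasureTheory Filter

open scoped Topology ENNReal NNReal

namespace CIDaux

lemma kronecker (a : ℕ → ℝ) (l : ℝ)
    (h : Tendsto (fun n => ∑ i ∈ Finset.range n, a i / ((i : ℝ) + 1)) atTop (𝓝 l)) :
    Tendsto (fun n : ℕ => (∑ i ∈ Finset.range n, a i) / (n : ℝ)) atTop (𝓝 0) := by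
  set S : ℕ → ℝ := fun n => ∑ i ∈ Finset.range n, a i / ((i : ℝ) + 1) with hS
  have key : ∀ n : ℕ, ∑ i ∈ Finset.range n, a i = n * S n - ∑ i ∈ Finset.range n, S i := by
    intro n
    induction n with
    | zero => simp
    | succ n ih =>
      rw [Finset.sum_range_succ, ih, Finset.sum_range_succ]
      have : S (n + 1) = S n + a n / ((n : ℝ) + 1) := Finset.sum_range_succ _ _
      rw [this]
      push_cast
      have : (n : ℝ) + 1 ≠ 0 := by positivity
      field_simp
      ring
  have h2 := h.sub h.cesaro
  rw [sub_self] at h2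
  refine h2.congr' ?_
  filter_upwards [eventually_ge_atTop 1] with n hn
  have : (n : ℝ) ≠ 0 := by positivity
  rw [key]
  field_simp

lemma l2_conv {Ω : Type*} {mΩ : MeasurableSpace Ω} (μ : Measure Ω) [IsProbabilityMeasure μ]
    (H : Filtration ℕ mΩ) (Z : ℕ → Ω → ℝ)
    (hZm : ∀ i, StronglyMeasurable[H (i + 1)] (Z i))
    (hZ2 : ∀ i, MemLp (Z i) 2 μ)
    (hZ0 : ∀ i, μ[Z i | H i] =ᵐ[μ] 0) (R : ℝ)
    (hR : ∀ n, ∑ i ∈ Finset.range n, ∫ ω, Z i ω ^ 2 ∂μ ≤ R) :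
    ∀ᵐ ω ∂μ, ∃ l, Tendsto (fun n => ∑ i ∈ Finset.range n, Z i ω) atTop (𝓝 l) := by
  set S : ℕ → Ω → ℝ := fun n ω => ∑ i ∈ Finset.range n, Z i ω with hS
  have hSs : ∀ n, S (n + 1) = S n + Z n := by
    intro n; ext ω; simp [hS, Finset.sum_range_succ]
  have hSm : ∀ n, StronglyMeasurable[H n] (S n) := by
    intro n
    refine Finset.stronglyMeasurable_fun_sum _ (fun i hi => (hZm i).mono (H.mono ?_))
    have := Finset.mem_range.1 hi
    omega
  have hS2 : ∀ n, MemLp (S n) 2 μ := fun n => memLp_finsetSum _ (fun i _ => hZ2 i)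
  have hSint : ∀ n, Integrable (S n) μ := fun n => (hS2 n).integrable one_le_two
  have hZint : ∀ n, Integrable (Z n) μ := fun n => (hZ2 n).integrable one_le_two
  have hmart : Martingale S H μ := by
    refine martingale_of_condExp_sub_eq_zero_nat hSm hSint (fun i => ?_)
    have : S (i + 1) - S i = Z i := by rw [hSs]; simp
    rw [this]; exact hZ0 i
  have hcross : ∀ n, ∫ ω, S n ω * Z n ω ∂μ = 0 := by
    intro n
    have h1 := condExp_mul_of_stronglyMeasurable_left (μ := μ) (hSm n)
      ((hS2 n).integrable_mul (hZ2 n)) (hZint n)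
    have h2 : μ[S n * Z n | H n] =ᵐ[μ] 0 := by
      filter_upwards [h1, hZ0 n] with ω a b
      rw [a]; simp [b]
    have h3 := integral_condExp (μ := μ) (H.le n) (f := S n * Z n)
    rw [integral_congr_ae h2] at h3
    simpa using h3.symm
  have hsq : ∀ n, ∫ ω, S n ω ^ 2 ∂μ = ∑ i ∈ Finset.range n, ∫ ω, Z i ω ^ 2 ∂μ := by
    intro n
    induction n with
    | zero => simp [hS]
    | succ n ih =>
      rw [Finset.sum_range_succ, ← ih]
      have e : ∀ ω, S (n + 1) ω ^ 2 = S n ω ^ 2 + Z n ω ^ 2 + 2 * (S n ω * Z n ω) := by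
        intro ω; rw [hSs]; simp only [Pi.add_apply]; ring
      simp_rw [e]
      have i1 := (hS2 n).integrable_sq
      have i2 := (hZ2 n).integrable_sq
      have i3 : Integrable (fun ω => S n ω * Z n ω) μ := (hS2 n).integrable_mul (hZ2 n)
      rw [integral_add (f := fun ω => S n ω ^ 2 + Z n ω ^ 2) (i1.add i2) (i3.const_mul 2),
        integral_add i1 i2, integral_const_mul, hcross]
      ring
  have hb : ∀ n, eLpNorm (S n) 1 μ ≤ ((1 + R).toNNReal : ℝ≥0) := by
    intro n
    rw [eLpNorm_one_eq_lintegral_enorm, ← ofReal_integral_norm_eq_lintegral_enorm (hSint n)]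
    refine ENNReal.ofReal_le_ofReal ?_
    have : ∫ ω, ‖S n ω‖ ∂μ ≤ ∫ ω, (1 + S n ω ^ 2) ∂μ := by
      refine integral_mono (hSint n).norm ((integrable_const 1).add (hS2 n).integrable_sq) ?_
      intro ω
      simp only [Real.norm_eq_abs]
      nlinarith [sq_abs (S n ω), sq_nonneg (|S n ω| - 1), abs_nonneg (S n ω)]
    refine this.trans ?_
    rw [integral_add (integrable_const 1) (hS2 n).integrable_sq, hsq]
    simpa using hR n
  filter_upwards [hmart.submartingale.ae_tendsto_limitProcess hb] with ω h using ⟨_, h⟩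

/-- c.i.d. consequence: marginals -/
lemma ident {Ω E : Type*} {mΩ : MeasurableSpace Ω} [MeasurableSpace E]
    (μ : Measure Ω) (X : ℕ → Ω → E)
    (hX : ∀ n, Measurable (X n)) (hcid : IsCIDnat μ X) (n : ℕ) :
    ProbabilityTheory.IdentDistrib (X (n + 1)) (X 1) μ μ := by
  refine ⟨(hX _).aemeasurable, (hX _).aemeasurable, ?_⟩
  induction n with
  | zero => rfl
  | succ n ih =>
    rw [← ih]
    have h := congrArg (Measure.map (fun x : Fin (n + 1) → E => x (Fin.last n))) (hcid n)
    rw [Measure.map_map (by fun_prop), Measure.map_map (by fun_prop)] at h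
    · simpa [Function.comp_def] using h
    · fun_prop
    · refine measurable_pi_lambda _ (fun i => ?_)
      split_ifs
      · exact hX _
      · exact hX _

lemma condExp_next {Ω E : Type*} {mΩ : MeasurableSpace Ω} [MeasurableSpace E]
    (μ : Measure Ω) [IsProbabilityMeasure μ] (X : ℕ → Ω → E)
    (hX : ∀ n, Measurable (X n))
    (hcid : IsCIDnat μ X)
    (𝒢 : Filtration ℕ mΩ)
    (h𝒢 : ∀ n, 𝒢 n = ⨆ i ∈ Set.Icc 1 n, MeasurableSpace.comap (X i) inferInstance)
    (g : E → ℝ) (hg : Measurable g) (hint : ∀ n, Integrable (fun ω => g (X (n + 1) ω)) μ) (n : ℕ) :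
    μ[fun ω => g (X (n + 2) ω) | 𝒢 n] =ᵐ[μ] μ[fun ω => g (X (n + 1) ω) | 𝒢 n] := by
  refine ae_eq_condExp_of_forall_setIntegral_eq (𝒢.le n) (hint n)
    (fun s _ _ => integrable_condExp.integrableOn) (fun s hs _ => ?_)
    stronglyMeasurable_condExp.aestronglyMeasurable
  rw [setIntegral_condExp (𝒢.le n) (hint (n + 1)) hs]
  have hle : 𝒢 n ≤ MeasurableSpace.comap (fun ω (i : Fin n) => X ((i : ℕ) + 1) ω) inferInstance := by
    rw [h𝒢]
    refine iSup₂_le (fun i hi => ?_)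
    rintro _ ⟨t, ht, rfl⟩
    refine ⟨(fun x : Fin n → E => x ⟨i - 1, by have := hi.1; have := hi.2; omega⟩) ⁻¹' t,
      (measurable_pi_apply (X := fun _ : Fin n => E) _) ht, ?_⟩
    ext ω
    have := hi.1
    simp [Nat.sub_add_cancel this]
  obtain ⟨B, hB, rfl⟩ := hle s hs
  have m1 : Measurable (fun ω (i : Fin (n + 1)) =>
        if (i : ℕ) < n then X ((i : ℕ) + 1) ω else X (n + 2) ω) := by
    refine measurable_pi_lambda _ (fun i => ?_)
    split_ifs
    · exact hX _
    · exact hX _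
  have m2 : Measurable (fun ω (i : Fin (n + 1)) => X ((i : ℕ) + 1) ω) := by fun_prop
  have mr : Measurable (fun x : Fin (n + 1) → E => fun i : Fin n => x i.castSucc) := by fun_prop
  have m0 : Measurable (fun ω (i : Fin n) => X ((i : ℕ) + 1) ω) := by fun_prop
  set φ : (Fin (n + 1) → E) → ℝ :=
    ((fun x : Fin (n + 1) → E => fun i : Fin n => x i.castSucc) ⁻¹' B).indicator
      (fun x => g (x (Fin.last n))) with hφ
  have mφ : Measurable φ :=
    (hg.comp (measurable_pi_apply _)).indicator (mr hB)
  have h := congrArg (fun ν => ∫ x, φ x ∂ν) (hcid n)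
  rw [integral_map m1.aemeasurable mφ.aestronglyMeasurable,
    integral_map m2.aemeasurable mφ.aestronglyMeasurable] at h
  rw [← integral_indicator (m0 hB), ← integral_indicator (m0 hB)]
  convert h using 2
  · ext ω
    have e : ((fun i : Fin (n + 1) => if (i : ℕ) < n then X ((i : ℕ) + 1) ω else X (n + 2) ω) ∈
        (fun x : Fin (n + 1) → E => fun i : Fin n => x i.castSucc) ⁻¹' B) ↔
        ω ∈ (fun ω (i : Fin n) => X ((i : ℕ) + 1) ω) ⁻¹' B := by
      change (fun i : Fin n => if ((i.castSucc : Fin (n + 1)) : ℕ) < n then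
        X (((i.castSucc : Fin (n + 1)) : ℕ) + 1) ω else X (n + 2) ω) ∈ B ↔
        (fun i : Fin n => X ((i : ℕ) + 1) ω) ∈ B
      simp
    by_cases hω : ω ∈ (fun ω (i : Fin n) => X ((i : ℕ) + 1) ω) ⁻¹' B
    · rw [Set.indicator_of_mem hω, hφ, Set.indicator_of_mem (e.2 hω)]
      simp
    · rw [Set.indicator_of_notMem hω, hφ, Set.indicator_of_notMem (fun h => hω (e.1 h))]
  · rfl

lemma cid_mart {Ω E : Type*} {mΩ : MeasurableSpace Ω} [MeasurableSpace E]
    (μ : Measure Ω) [IsProbabilityMeasure μ] (X : ℕ → Ω → E)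
    (hX : ∀ n, Measurable (X n))
    (hcid : IsCIDnat μ X)
    (𝒢 : Filtration ℕ mΩ)
    (h𝒢 : ∀ n, 𝒢 n = ⨆ i ∈ Set.Icc 1 n, MeasurableSpace.comap (X i) inferInstance)
    (g : E → ℝ) (hg : Measurable g) (hint : Integrable (fun ω => g (X 1 ω)) μ) :
    ∃ L : Ω → ℝ, Measurable L ∧ (∀ᵐ ω ∂μ, Tendsto (fun n => (μ[fun ω => g (X (n + 1) ω) | 𝒢 n]) ω) atTop
      (𝓝 (L ω))) ∧ eLpNorm L 1 μ ≤ eLpNorm (fun ω => g (X 1 ω)) 1 μ := by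
  have hid : ∀ n, ProbabilityTheory.IdentDistrib (fun ω => g (X (n + 1) ω))
    (fun ω => g (X 1 ω)) μ μ := fun n => (ident μ X hX hcid n).comp hg
  have hi : ∀ n, Integrable (fun ω => g (X (n + 1) ω)) μ :=
    fun n => (hid n).integrable_iff.2 hint
  have hm : Martingale (fun n => μ[fun ω => g (X (n + 1) ω) | 𝒢 n]) 𝒢 μ := by
    refine martingale_nat (fun n => stronglyMeasurable_condExp) (fun n => integrable_condExp) ?_
    intro n
    refine (condExp_next μ X hX hcid 𝒢 h𝒢 g hg hi n).symm.trans ?_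
    exact (condExp_condExp_of_le (𝒢.mono (Nat.le_succ n)) (𝒢.le _)).symm
  have hb : ∀ n, eLpNorm (μ[fun ω => g (X (n + 1) ω) | 𝒢 n]) 1 μ
      ≤ eLpNorm (fun ω => g (X 1 ω)) 1 μ := fun n =>
    (eLpNorm_condExp_le_eLpNorm _ le_rfl).trans ((hid n).eLpNorm_eq 1).le
  have hfin : eLpNorm (fun ω => g (X 1 ω)) 1 μ ≠ ∞ := (memLp_one_iff_integrable.2 hint).2.ne
  have hb' : ∀ n, eLpNorm (μ[fun ω => g (X (n + 1) ω) | 𝒢 n]) 1 μ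
      ≤ ((eLpNorm (fun ω => g (X 1 ω)) 1 μ).toNNReal : ℝ≥0) := fun n => by
    rw [ENNReal.coe_toNNReal hfin]; exact hb n
  have hc := hm.submartingale.ae_tendsto_limitProcess hb'
  refine ⟨_, Filtration.stronglyMeasurable_limit_process'.measurable, hc, ?_⟩
  exact Lp.eLpNorm_le_of_ae_tendsto (Eventually.of_forall hb)
    (fun n => integrable_condExp.aestronglyMeasurable) hc

lemma tail_tendsto {Ω E : Type*} {mΩ : MeasurableSpace Ω} [MeasurableSpace E]
    (μ : Measure Ω) [IsProbabilityMeasure μ] (X : ℕ → Ω → E)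
    (hX : ∀ n, Measurable (X n))
    (hcid : IsCIDnat μ X)
    (𝒢 : Filtration ℕ mΩ)
    (h𝒢 : ∀ n, 𝒢 n = ⨆ i ∈ Set.Icc 1 n, MeasurableSpace.comap (X i) inferInstance)
    (f : E → ℝ) (hf : Measurable f) (hint : Integrable (fun ω => f (X 1 ω)) μ) (k : ℕ) :
    ∀ᵐ ω ∂μ, Tendsto (fun i : ℕ => (μ[fun ω =>
      {x | ((i + 1 : ℕ) : ℝ) < |f x|}.indicator (fun x => |f x|) (X (i + k + 1) ω) | 𝒢 (i + k)]) ω)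
      atTop (𝓝 0) := by
  set t : ℕ → E → ℝ := fun c => {x | (c : ℝ) < |f x|}.indicator (fun x => |f x|) with ht
  have htm : ∀ c, Measurable (t c) := fun c =>
    hf.abs.indicator (measurableSet_lt measurable_const hf.abs)
  have ht0 : ∀ c x, 0 ≤ t c x := fun c x => Set.indicator_nonneg (fun x _ => abs_nonneg _) x
  have htle : ∀ c x, t c x ≤ |f x| := fun c x =>
    Set.indicator_le_self' (fun x _ => abs_nonneg _) x
  have hanti : ∀ c d x, c ≤ d → t d x ≤ t c x := by
    intro c d x hcd
    refine Set.indicator_le_indicator_of_subset ?_ (fun x => abs_nonneg _) x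
    intro y hy
    simp only [Set.mem_ofPred_eq] at hy ⊢
    exact lt_of_le_of_lt (by exact_mod_cast hcd) hy
  have hti : ∀ c n, Integrable (fun ω => t c (X (n + 1) ω)) μ := by
    intro c n
    have : Integrable (fun ω => f (X (n + 1) ω)) μ :=
      ((ident μ X hX hcid n).comp hf).integrable_iff.2 hint
    refine this.mono ((htm c).comp (hX _)).aestronglyMeasurable (ae_of_all _ fun ω => ?_)
    rw [Real.norm_of_nonneg (ht0 _ _)]
    exact htle _ _
  choose L hLme hL hLn using fun c => cid_mart μ X hX hcid 𝒢 h𝒢 (t c) (htm c) (hti c 0)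
  have hsmall : Tendsto (fun c => eLpNorm (fun ω => t c (X 1 ω)) 1 μ) atTop (𝓝 0) := by
    simp_rw [eLpNorm_one_eq_lintegral_enorm]
    have h0 : ∫⁻ ω, (0 : ℝ≥0∞) ∂μ = 0 := by simp
    rw [← h0]
    refine tendsto_lintegral_of_dominated_convergence (fun ω => ‖f (X 1 ω)‖ₑ)
      (fun c => ((htm c).comp (hX 1)).enorm) (fun c => ae_of_all _ fun ω => ?_)
      hint.2.ne (ae_of_all _ fun ω => ?_)
    · rw [enorm_le_iff_norm_le, Real.norm_of_nonneg (ht0 _ _)]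
      exact htle _ _
    · refine tendsto_const_nhds.congr' ?_
      obtain ⟨N, hN⟩ := exists_nat_gt |f (X 1 ω)|
      filter_upwards [eventually_ge_atTop N] with c hc
      have : (N : ℝ) ≤ c := by exact_mod_cast hc
      have : t c (X 1 ω) = 0 := Set.indicator_of_notMem (by simp; linarith) _
      simp [this]
  have hLm : ∀ c, Measurable (fun ω => ‖L c ω‖ₑ) := fun c => (hLme c).enorm
  have hfat : ∀ᵐ ω ∂μ, liminf (fun c => ‖L c ω‖ₑ) atTop = 0 := by
    have h1 := lintegral_liminf_le (u := atTop) (μ := μ) (f := fun c ω => ‖L c ω‖ₑ) hLm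
    have h2 : Tendsto (fun c => ∫⁻ ω, ‖L c ω‖ₑ ∂μ) atTop (𝓝 0) := by
      refine tendsto_of_tendsto_of_tendsto_of_le_of_le tendsto_const_nhds hsmall
        (fun _ => zero_le) (fun c => ?_)
      have := hLn c
      rwa [eLpNorm_one_eq_lintegral_enorm] at this
    rw [h2.liminf_eq] at h1
    have hlm : Measurable (fun ω => liminf (fun c => ‖L c ω‖ₑ) atTop) := Measurable.liminf hLm
    have h3 := (lintegral_eq_zero_iff hlm).1 (le_antisymm h1 (zero_le))
    exact h3
  have hmono : ∀ᵐ ω ∂μ, ∀ c i, c ≤ i → (μ[fun ω => t i (X (i - 1 + k + 1) ω) | 𝒢 (i - 1 + k)]) ω ≤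
      (μ[fun ω => t c (X (i - 1 + k + 1) ω) | 𝒢 (i - 1 + k)]) ω := by
    rw [ae_all_iff]; intro c
    rw [ae_all_iff]; intro i
    by_cases hci : c ≤ i
    · filter_upwards [condExp_mono (m := 𝒢 (i - 1 + k)) (hti i (i - 1 + k)) (hti c (i - 1 + k))
        (ae_of_all _ fun ω => hanti c i _ hci)] with ω h _ using h
    · exact ae_of_all _ fun ω h => absurd h hci
  have hnn : ∀ᵐ ω ∂μ, ∀ i : ℕ, 0 ≤ (μ[fun ω => t (i + 1) (X (i + k + 1) ω) | 𝒢 (i + k)]) ω := by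
    rw [ae_all_iff]; intro i
    exact condExp_nonneg (ae_of_all _ fun ω => ht0 _ _)
  have hL' := ae_all_iff.2 hL
  filter_upwards [hfat, hmono, hnn, hL'] with ω h1 h2 h3 h4
  refine (tendsto_order.2 ⟨fun a ha => Eventually.of_forall fun i => lt_of_lt_of_le ha (h3 i), ?_⟩)
  intro ε hε
  have hlt : liminf (fun c => ‖L c ω‖ₑ) atTop < ENNReal.ofReal ε := by
    rw [h1]; exact ENNReal.ofReal_pos.2 hε
  obtain ⟨c, hc⟩ := (frequently_lt_of_liminf_lt (by isBoundedDefault) hlt).exists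
  have hc' : L c ω < ε := by
    rw [← ofReal_norm] at hc
    exact lt_of_le_of_lt (Real.le_norm_self _) ((ENNReal.ofReal_lt_ofReal_iff hε).1 hc)
  have h5 : Tendsto (fun i => (μ[fun ω => t c (X (i + k + 1) ω) | 𝒢 (i + k)]) ω) atTop
      (𝓝 (L c ω)) := (h4 c).comp (tendsto_add_atTop_nat k)
  filter_upwards [h5.eventually (gt_mem_nhds hc'), eventually_ge_atTop c] with i hi hci
  exact lt_of_le_of_lt (h2 c (i + 1) (by omega)) hi

lemma stepA {Ω E : Type*} {mΩ : MeasurableSpace Ω} [MeasurableSpace E]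
    (μ : Measure Ω) [IsProbabilityMeasure μ] (X : ℕ → Ω → E)
    (hX : ∀ n, Measurable (X n))
    (hcid : IsCIDnat μ X)
    (𝒢 : Filtration ℕ mΩ)
    (h𝒢 : ∀ n, 𝒢 n = ⨆ i ∈ Set.Icc 1 n, MeasurableSpace.comap (X i) inferInstance)
    (f : E → ℝ) (hf : Measurable f) (hint : Integrable (fun ω => f (X 1 ω)) μ) (k : ℕ)
    (Y : ℕ → Ω → ℝ) (hY : ∀ i, StronglyMeasurable[𝒢 (i + k)] (Y i)) (C : ℝ)
    (hYC : ∀ i ω, |Y i ω| ≤ C) :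
    ∀ᵐ ω ∂μ, Tendsto (fun n : ℕ => (∑ i ∈ Finset.range n, Y i ω * (f (X (i + k + 1) ω) -
      (μ[fun ω => f (X (i + k + 1) ω) | 𝒢 (i + k)]) ω)) / (n : ℝ)) atTop (𝓝 0) := by
  have hYm : ∀ i, StronglyMeasurable (Y i) := fun i => (hY i).mono (𝒢.le _)
  set t : ℕ → E → ℝ := fun i => {x | |f x| ≤ ((i + 1 : ℕ) : ℝ)}.indicator f with ht
  set s : ℕ → E → ℝ := fun i => {x | ((i + 1 : ℕ) : ℝ) < |f x|}.indicator (fun x => |f x|) with hs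
  have htm : ∀ i, Measurable (t i) := fun i =>
    hf.indicator (measurableSet_le hf.abs measurable_const)
  have ht1 : ∀ (i : ℕ) x, |f x| ≤ ((i + 1 : ℕ) : ℝ) → t i x = f x := fun i x h =>
    Set.indicator_of_mem (s := {x | |f x| ≤ ((i + 1 : ℕ) : ℝ)}) h _
  have ht2 : ∀ (i : ℕ) x, ¬ |f x| ≤ ((i + 1 : ℕ) : ℝ) → t i x = 0 := fun i x h =>
    Set.indicator_of_notMem (s := {x | |f x| ≤ ((i + 1 : ℕ) : ℝ)}) h _
  have hs1 : ∀ (i : ℕ) x, |f x| ≤ ((i + 1 : ℕ) : ℝ) → s i x = 0 := fun i x h =>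
    Set.indicator_of_notMem (s := {x | ((i + 1 : ℕ) : ℝ) < |f x|}) (not_lt.2 h) _
  have hs2 : ∀ (i : ℕ) x, ¬ |f x| ≤ ((i + 1 : ℕ) : ℝ) → s i x = |f x| := fun i x h =>
    Set.indicator_of_mem (s := {x | ((i + 1 : ℕ) : ℝ) < |f x|}) (not_le.1 h) _
  have htb : ∀ i x, |t i x| ≤ ((i + 1 : ℕ) : ℝ) := by
    intro i x
    by_cases h : |f x| ≤ ((i + 1 : ℕ) : ℝ)
    · have : t i x = f x := ht1 _ _ h
      rw [this]; exact h
    · have : t i x = 0 := ht2 _ _ h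
      rw [this, abs_zero]; positivity
  have hts : ∀ i x, |f x - t i x| = s i x := by
    intro i x
    by_cases h : |f x| ≤ ((i + 1 : ℕ) : ℝ)
    · have h1 : t i x = f x := ht1 _ _ h
      have h2 : s i x = 0 := hs1 _ _ h
      rw [h1, h2]; simp
    · have h1 : t i x = 0 := ht2 _ _ h
      have h2 : s i x = |f x| := hs2 _ _ h
      rw [h1, h2]; simp
  have hfi : ∀ n, Integrable (fun ω => f (X (n + 1) ω)) μ := fun n =>
    ((ident μ X hX hcid n).comp hf).integrable_iff.2 hint
  set T : ℕ → Ω → ℝ := fun i ω => t i (X (i + k + 1) ω) with hT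
  have hTm : ∀ i, StronglyMeasurable (T i) := fun i =>
    ((htm i).comp (hX _)).stronglyMeasurable
  have hTL : ∀ i, MemLp (T i) 2 μ := fun i =>
    MemLp.of_bound (hTm i).aestronglyMeasurable _ (ae_of_all _ fun ω => htb i _)
  have hTi : ∀ i, Integrable (T i) μ := fun i => (hTL i).integrable one_le_two
  set D : ℕ → Ω → ℝ := fun i => T i - μ[T i | 𝒢 (i + k)] with hD
  have hDL : ∀ i, MemLp (D i) 2 μ := fun i =>
    (hTL i).sub ((hTL i).condExp one_le_two)
  have hDi : ∀ i, Integrable (D i) μ := fun i => (hDL i).integrable one_le_two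
  have hDint : ∀ i, ∫ ω, D i ω ^ 2 ∂μ ≤ ∫ ω, T i ω ^ 2 ∂μ := by
    intro i
    have h1 := ProbabilityTheory.condVar_ae_le_condExp_sq (𝒢.le (i + k)) (hTL i)
    have h2 := integral_mono_ae ProbabilityTheory.integrable_condVar integrable_condExp h1
    rw [integral_condExp (𝒢.le (i + k))] at h2
    unfold ProbabilityTheory.condVar at h2
    rw [integral_condExp (𝒢.le (i + k))] at h2
    exact h2
  -- filtration
  let H : Filtration ℕ mΩ := ⟨fun i => 𝒢 (i + k), fun i j h => 𝒢.mono (by omega),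
    fun i => 𝒢.le _⟩
  set Z : ℕ → Ω → ℝ := fun i ω => Y i ω * D i ω / ((i : ℝ) + 1) with hZ
  have hXm : ∀ i, Measurable[𝒢 (i + 1)] (X (i + 1)) := by
    intro i
    rw [h𝒢, measurable_iff_comap_le]
    exact le_iSup₂_of_le (i + 1) ⟨by omega, le_rfl⟩ le_rfl
  have hDm : ∀ i, StronglyMeasurable[H (i + 1)] (D i) := by
    intro i
    refine StronglyMeasurable.sub ?_ (stronglyMeasurable_condExp.mono (𝒢.mono (by omega)))
    have : Measurable[𝒢 (i + k + 1)] (T i) := (htm i).comp (hXm (i + k))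
    have e : H (i + 1) = 𝒢 (i + k + 1) := by
      change 𝒢 (i + 1 + k) = _
      congr 1; omega
    rw [e]
    exact this.stronglyMeasurable
  have hZm : ∀ i, StronglyMeasurable[H (i + 1)] (Z i) := by
    intro i
    have hY' : StronglyMeasurable[H (i + 1)] (Y i) := (hY i).mono (𝒢.mono (by omega))
    have := (hY'.mul (hDm i)).mul (stronglyMeasurable_const (b := ((i : ℝ) + 1)⁻¹))
    exact this
  have hC0 : 0 ≤ C := by
    obtain ⟨ω⟩ : Nonempty Ω := nonempty_of_isProbabilityMeasure μ
    exact (abs_nonneg _).trans (hYC 0 ω)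
  have hZL : ∀ i, MemLp (Z i) 2 μ := by
    intro i
    refine (hDL i).of_le_mul (c := C) ((hZm i).mono (H.le _)).aestronglyMeasurable
      (ae_of_all _ fun ω => ?_)
    have h1 : (1 : ℝ) ≤ (i : ℝ) + 1 := by linarith [Nat.cast_nonneg (α := ℝ) i]
    simp only [hZ, Real.norm_eq_abs, abs_div, abs_mul]
    rw [abs_of_pos (by linarith : (0 : ℝ) < (i : ℝ) + 1)]
    refine (div_le_self (by positivity) h1).trans ?_
    exact mul_le_mul_of_nonneg_right (hYC i ω) (abs_nonneg _)
  have hZ0 : ∀ i, μ[Z i | H i] =ᵐ[μ] 0 := by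
    intro i
    have hD0 : μ[D i | 𝒢 (i + k)] =ᵐ[μ] 0 := by
      have h1 := condExp_sub (hTi i) (integrable_condExp (m := 𝒢 (i + k)) (f := T i) (μ := μ))
        (𝒢 (i + k))
      have h2 : μ[μ[T i | 𝒢 (i + k)] | 𝒢 (i + k)] = μ[T i | 𝒢 (i + k)] :=
        condExp_of_stronglyMeasurable (𝒢.le _) stronglyMeasurable_condExp integrable_condExp
      rw [h2] at h1
      refine h1.trans ?_
      rw [sub_self]
    have e : Z i = (fun ω => Y i ω * ((i : ℝ) + 1)⁻¹) * D i := by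
      ext ω; simp only [hZ, Pi.mul_apply]; ring
    have hm : StronglyMeasurable[𝒢 (i + k)] (fun ω => Y i ω * ((i : ℝ) + 1)⁻¹) :=
      (hY i).mul stronglyMeasurable_const
    have h3 := condExp_mul_of_stronglyMeasurable_left (μ := μ) hm
      (by rw [← e]; exact (hZL i).integrable one_le_two) (hDi i)
    rw [← e] at h3
    change μ[Z i | 𝒢 (i + k)] =ᵐ[μ] 0
    filter_upwards [h3, hD0] with ω a b
    rw [a]; simp [b]
  have hTid : ∀ i, ∫ ω, T i ω ^ 2 ∂μ = ∫ ω, t i (X 1 ω) ^ 2 ∂μ := by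
    intro i
    exact ((ident μ X hX hcid (i + k)).comp ((htm i).pow_const 2)).integral_eq
  have hsum : ∀ n, ∑ i ∈ Finset.range n, ∫ ω, Z i ω ^ 2 ∂μ
      ≤ C ^ 2 * (2 * ∫ ω, |f (X 1 ω)| ∂μ) := by
    intro n
    have hz : ∀ i, ∫ ω, Z i ω ^ 2 ∂μ ≤
        C ^ 2 * ((((i + 1 : ℕ) : ℝ) ^ 2)⁻¹ * ∫ ω, t i (X 1 ω) ^ 2 ∂μ) := by
      intro i
      rw [← hTid]
      calc ∫ ω, Z i ω ^ 2 ∂μ ≤ ∫ ω, C ^ 2 * (((i + 1 : ℕ) : ℝ) ^ 2)⁻¹ * D i ω ^ 2 ∂μ := by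
            refine integral_mono (hZL i).integrable_sq ((hDL i).integrable_sq.const_mul _) ?_
            intro ω
            have : Z i ω ^ 2 = Y i ω ^ 2 * (((i + 1 : ℕ) : ℝ) ^ 2)⁻¹ * D i ω ^ 2 := by
              simp only [hZ]; push_cast; field_simp
            simp only [this]
            have h2 : Y i ω ^ 2 ≤ C ^ 2 := sq_le_sq' (by linarith [abs_le.1 (hYC i ω)])
              (abs_le.1 (hYC i ω)).2
            gcongr
        _ = C ^ 2 * ((((i + 1 : ℕ) : ℝ) ^ 2)⁻¹ * ∫ ω, D i ω ^ 2 ∂μ) := by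
            rw [integral_const_mul]; ring
        _ ≤ _ := by
            have := hDint i
            gcongr
    refine (Finset.sum_le_sum (fun i _ => hz i)).trans ?_
    rw [← Finset.mul_sum]
    refine mul_le_mul_of_nonneg_left ?_ (sq_nonneg C)
    let _ : MeasureSpace Ω := ⟨μ⟩
    have _ : IsProbabilityMeasure (volume : Measure Ω) := ‹IsProbabilityMeasure μ›
    have h := ProbabilityTheory.sum_variance_truncation_le (Ω := Ω)
      (X := fun ω => |f (X 1 ω)|) hint.abs (fun ω => abs_nonneg _) (n + 1)
    rw [Finset.sum_range_succ'] at h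
    simp only [Nat.cast_zero, ne_eq, OfNat.ofNat_ne_zero, not_false_eq_true, zero_pow, inv_zero,
      zero_mul, add_zero] at h
    refine le_trans (le_of_eq ?_) h
    refine Finset.sum_congr rfl (fun i _ => ?_)
    congr 1
    refine integral_congr_ae (ae_of_all _ fun ω => ?_)
    simp only [ProbabilityTheory.truncation, Pi.pow_apply, Function.comp_apply]
    by_cases hh : |f (X 1 ω)| ≤ ((i + 1 : ℕ) : ℝ)
    · have h1 : t i (X 1 ω) = f (X 1 ω) := ht1 _ _ hh
      have hp : (0 : ℝ) < ((i + 1 : ℕ) : ℝ) := by positivity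
      have hmem : |f (X 1 ω)| ∈ Set.Ioc (-((i + 1 : ℕ) : ℝ)) ((i + 1 : ℕ) : ℝ) :=
        ⟨by linarith [abs_nonneg (f (X 1 ω))], hh⟩
      rw [h1, Set.indicator_of_mem hmem]
      simp
    · have h1 : t i (X 1 ω) = 0 := ht2 _ _ hh
      rw [h1, Set.indicator_of_notMem (fun h => hh h.2)]
  have hconv := l2_conv μ H Z hZm hZL hZ0 _ hsum
  -- Borel-Cantelli
  have hBC : ∀ᵐ ω ∂μ, ∀ᶠ i : ℕ in atTop, f (X (i + k + 1) ω) = T i ω := by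
    have hfin : ∑' i : ℕ, μ {ω | ((i + 1 : ℕ) : ℝ) < |f (X (i + k + 1) ω)|} ≠ ∞ := by
      let _ : MeasureSpace Ω := ⟨μ⟩
      have _ : IsProbabilityMeasure (volume : Measure Ω) := ‹IsProbabilityMeasure μ›
      have h := ProbabilityTheory.tsum_prob_mem_Ioi_lt_top (Ω := Ω)
        (X := fun ω => |f (X 1 ω)|) hint.abs (fun ω => abs_nonneg _)
      refine ne_top_of_le_ne_top h.ne ?_
      have : ∀ i : ℕ, μ {ω | ((i + 1 : ℕ) : ℝ) < |f (X (i + k + 1) ω)|}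
          ≤ μ {ω | |f (X 1 ω)| ∈ Set.Ioi (i : ℝ)} := by
        intro i
        have h1 := ((ident μ X hX hcid (i + k)).comp hf.abs).measure_mem_eq
          (s := Set.Ioi ((i + 1 : ℕ) : ℝ)) measurableSet_Ioi
        refine le_trans (le_of_eq h1) (measure_mono ?_)
        intro ω hω
        have hω' : ((i + 1 : ℕ) : ℝ) < |f (X 1 ω)| := hω
        push_cast at hω'
        change (i : ℝ) < |f (X 1 ω)|
        linarith
      exact ENNReal.tsum_le_tsum this
    filter_upwards [ae_eventually_notMem hfin] with ω hω
    filter_upwards [hω] with i hi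
    have : |f (X (i + k + 1) ω)| ≤ ((i + 1 : ℕ) : ℝ) := not_lt.1 hi
    exact (Set.indicator_of_mem (s := {x | |f x| ≤ ((i + 1 : ℕ) : ℝ)}) this f).symm
  have htail := tail_tendsto μ X hX hcid 𝒢 h𝒢 f hf hint k
  have hdiff : ∀ᵐ ω ∂μ, ∀ i : ℕ, |(μ[fun ω => f (X (i + k + 1) ω) | 𝒢 (i + k)]) ω -
      (μ[T i | 𝒢 (i + k)]) ω| ≤ (μ[fun ω => s i (X (i + k + 1) ω) | 𝒢 (i + k)]) ω := by
    rw [ae_all_iff]; intro i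
    have hdi : Integrable ((fun ω => f (X (i + k + 1) ω)) - T i) μ := (hfi (i + k)).sub (hTi i)
    have hsi : Integrable (fun ω => s i (X (i + k + 1) ω)) μ := by
      refine hdi.abs.congr (ae_of_all _ fun ω => ?_)
      exact hts i _
    have a1 := condExp_sub (hfi (i + k)) (hTi i) (𝒢 (i + k))
    have a2 := condExp_mono (m := 𝒢 (i + k)) hdi hsi
      (ae_of_all _ fun ω => (le_abs_self _).trans (hts i (X (i + k + 1) ω)).le)
    have a3 := condExp_mono (m := 𝒢 (i + k)) hdi.neg hsi
      (ae_of_all _ fun ω => (neg_le_abs _).trans (hts i (X (i + k + 1) ω)).le)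
    have a4 := condExp_neg ((fun ω => f (X (i + k + 1) ω)) - T i) (𝒢 (i + k)) (μ := μ)
    filter_upwards [a1, a2, a3, a4] with ω b1 b2 b3 b4
    rw [b4] at b3
    simp only [Pi.neg_apply] at b3
    rw [b1] at b2 b3
    simp only [Pi.sub_apply] at b2 b3
    exact abs_le.2 ⟨by linarith, b2⟩
  filter_upwards [hconv, hBC, htail, hdiff] with ω ⟨l, hl⟩ h2 h3 h4
  have k1 := kronecker (fun i => Y i ω * D i ω) l hl
  have k2 : Tendsto (fun i : ℕ => Y i ω * ((f (X (i + k + 1) ω) - T i ω) -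
      ((μ[fun ω => f (X (i + k + 1) ω) | 𝒢 (i + k)]) ω - (μ[T i | 𝒢 (i + k)]) ω)))
      atTop (𝓝 0) := by
    have h3' := h3.const_mul C
    rw [mul_zero] at h3'
    refine squeeze_zero_norm' ?_ h3'
    filter_upwards [h2] with i hi
    rw [hi, sub_self, zero_sub, Real.norm_eq_abs, abs_mul, abs_neg]
    exact mul_le_mul (hYC i ω) (h4 i) (abs_nonneg _) hC0
  have k3 := k1.add k2.cesaro
  rw [add_zero] at k3
  refine k3.congr (fun n => ?_)
  rw [← div_eq_inv_mul, ← add_div, ← Finset.sum_add_distrib]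
  congr 1
  refine Finset.sum_congr rfl (fun i _ => ?_)
  simp only [hD, Pi.sub_apply]
  ring

lemma main_ae {Ω E : Type*} {mΩ : MeasurableSpace Ω} [MeasurableSpace E]
    (μ : Measure Ω) [IsProbabilityMeasure μ] (X : ℕ → Ω → E)
    (hX : ∀ n, Measurable (X n))
    (hcid : IsCIDnat μ X)
    (𝒢 : Filtration ℕ mΩ)
    (h𝒢 : ∀ n, 𝒢 n = ⨆ i ∈ Set.Icc 1 n, MeasurableSpace.comap (X i) inferInstance)
    (f : ℕ → E → ℝ) (hf : ∀ j, Measurable (f j)) (V : ℕ → Ω → ℝ) (k : ℕ)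
    (hint : ∀ j < k, Integrable (fun ω => f j (X 1 ω)) μ)
    (hbd : ∀ j, j + 1 < k → ∃ C, ∀ x, |f j x| ≤ C)
    (hV : ∀ j < k, ∀ᵐ ω ∂μ, Tendsto (fun n => (μ[(fun ω' => f j (X (n + 1) ω')) | 𝒢 n]) ω)
      atTop (𝓝 (V j ω))) :
    (∀ᵐ ω ∂μ, Tendsto
        (fun n : ℕ => (∑ i ∈ Finset.range n, ∏ j ∈ Finset.range k, f j (X (i + j + 1) ω)) / (n : ℝ))
        atTop (𝓝 (∏ j ∈ Finset.range k, V j ω))) := by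
  induction k with
  | zero =>
    refine ae_of_all _ fun ω => ?_
    simp only [Finset.range_zero, Finset.prod_empty, Finset.sum_const, Finset.card_range,
      nsmul_eq_mul, mul_one]
    refine tendsto_const_nhds.congr' ?_
    filter_upwards [eventually_ge_atTop 1] with n hn
    have : (n : ℝ) ≠ 0 := by positivity
    field_simp
  | succ k ih =>
    have ih' := ih (fun j hj => hint j (by omega)) (fun j hj => hbd j (by omega))
      (fun j hj => hV j (by omega))
    have hb : ∀ j, ∃ C, j < k → ∀ x, |f j x| ≤ C := by
      intro j
      by_cases h : j < k
      · obtain ⟨C, hC⟩ := hbd j (by omega)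
        exact ⟨C, fun _ => hC⟩
      · exact ⟨0, fun h' => absurd h' h⟩
    choose C hC using hb
    set Y : ℕ → Ω → ℝ := fun i ω => ∏ j ∈ Finset.range k, f j (X (i + j + 1) ω) with hY
    have hXm : ∀ i n, 1 ≤ i → i ≤ n → Measurable[𝒢 n] (X i) := by
      intro i n h1 h2
      rw [h𝒢, measurable_iff_comap_le]
      exact le_iSup₂_of_le i ⟨h1, h2⟩ le_rfl
    have hYm : ∀ i, StronglyMeasurable[𝒢 (i + k)] (Y i) := by
      intro i
      refine Finset.stronglyMeasurable_fun_prod _ (fun j hj => ?_)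
      have := Finset.mem_range.1 hj
      exact ((hf j).comp (hXm (i + j + 1) (i + k) (by omega) (by omega))).stronglyMeasurable
    have hYC : ∀ i ω, |Y i ω| ≤ ∏ j ∈ Finset.range k, C j := by
      intro i ω
      simp only [hY]
      rw [Finset.abs_prod]
      exact Finset.prod_le_prod (fun _ _ => abs_nonneg _)
        (fun j hj => hC j (Finset.mem_range.1 hj) _)
    have hA := stepA μ X hX hcid 𝒢 h𝒢 (f k) (hf k) (hint k (by omega)) k Y hYm _ hYC
    filter_upwards [ih', hA, hV k (by omega)] with ω h1 h2 h3
    have h3' : Tendsto (fun i => (μ[(fun ω' => f k (X (i + k + 1) ω')) | 𝒢 (i + k)]) ω - V k ω)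
        atTop (𝓝 0) := by
      have := (h3.comp (tendsto_add_atTop_nat k)).sub_const (V k ω)
      rw [sub_self] at this
      exact this
    have h4 : Tendsto (fun i => Y i ω *
        ((μ[(fun ω' => f k (X (i + k + 1) ω')) | 𝒢 (i + k)]) ω - V k ω)) atTop (𝓝 0) := by
      have h5 := h3'.norm.const_mul (∏ j ∈ Finset.range k, C j)
      rw [norm_zero, mul_zero] at h5
      refine squeeze_zero_norm (fun i => ?_) h5
      rw [norm_mul]
      exact mul_le_mul_of_nonneg_right (hYC i ω) (norm_nonneg _)
    have h6 := (h2.add h4.cesaro).add (h1.mul_const (V k ω))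
    rw [add_zero, zero_add, ← Finset.prod_range_succ] at h6
    refine h6.congr (fun n => ?_)
    rw [← div_eq_inv_mul, ← add_div, ← Finset.sum_add_distrib, div_mul_eq_mul_div, ← add_div,
      Finset.sum_mul, ← Finset.sum_add_distrib]
    congr 1
    refine Finset.sum_congr rfl (fun i _ => ?_)
    rw [Finset.prod_range_succ]
    simp only [hY]
    ring

lemma ui_dom {Ω : Type*} {mΩ : MeasurableSpace Ω} (μ : Measure Ω)
    (F P : ℕ → Ω → ℝ) (hF : UniformIntegrable F 1 μ)
    (hP : ∀ i, AEStronglyMeasurable (P i) μ) (h : ∀ i ω, ‖P i ω‖ ≤ ‖F i ω‖) :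
    UniformIntegrable P 1 μ := by
  obtain ⟨_, h2, C, h3⟩ := hF
  refine ⟨hP, fun ε hε => ?_, C, fun i => (eLpNorm_mono (h i)).trans (h3 i)⟩
  obtain ⟨δ, hδ, hh⟩ := h2 hε
  refine ⟨δ, hδ, fun i s hs hsδ => (eLpNorm_mono (fun ω => ?_)).trans (hh i s hs hsδ)⟩
  by_cases hω : ω ∈ s
  · simpa [hω] using h i ω
  · simp [hω]

lemma main_L1 {Ω E : Type*} {mΩ : MeasurableSpace Ω} [MeasurableSpace E]
    (μ : Measure Ω) [IsProbabilityMeasure μ] (X : ℕ → Ω → E)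
    (hX : ∀ n, Measurable (X n))
    (hcid : IsCIDnat μ X)
    (f : ℕ → E → ℝ) (hf : ∀ j, Measurable (f j)) (W : Ω → ℝ) (k : ℕ)
    (hint : Integrable (fun ω => f k (X 1 ω)) μ)
    (hbd : ∀ j, j < k → ∃ C, ∀ x, |f j x| ≤ C)
    (hV : (∀ᵐ ω ∂μ, Tendsto
        (fun n : ℕ => (∑ i ∈ Finset.range n, ∏ j ∈ Finset.range (k + 1),
          f j (X (i + j + 1) ω)) / (n : ℝ)) atTop (𝓝 (W ω)))) :
    Tendsto (fun n : ℕ => ∫ ω, |(∑ i ∈ Finset.range n, ∏ j ∈ Finset.range (k + 1),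
          f j (X (i + j + 1) ω)) / (n : ℝ) - W ω| ∂μ) atTop (𝓝 0) := by
  have hb : ∀ j, ∃ C, j < k → ∀ x, |f j x| ≤ C := by
    intro j
    by_cases h : j < k
    · obtain ⟨C, hC⟩ := hbd j (by omega)
      exact ⟨C, fun _ => hC⟩
    · exact ⟨0, fun h' => absurd h' h⟩
  choose C hC using hb
  set A : ℝ := ∏ j ∈ Finset.range k, C j with hA
  set P : ℕ → Ω → ℝ := fun i ω => ∏ j ∈ Finset.range (k + 1), f j (X (i + j + 1) ω) with hP
  have hPm : ∀ i, Measurable (P i) := fun i =>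
    Finset.measurable_fun_prod _ (fun j _ => (hf j).comp (hX _))
  let F : ℕ → Ω → ℝ := fun i ω => A * f k (X (i + 1) ω)
  have hF : UniformIntegrable F 1 μ := by
    refine ProbabilityTheory.MemLp.uniformIntegrable_of_identDistrib (j := 0) le_rfl (by simp)
      (memLp_one_iff_integrable.2 (hint.const_mul A)) (fun i => ?_)
    exact (ident μ X hX hcid i).comp ((hf k).const_mul A)
  have hF' : UniformIntegrable (fun i => F (i + k)) 1 μ := by
    obtain ⟨h1, h2, B, h3⟩ := hF
    refine ⟨fun i => h1 _, fun ε hε => ?_, B, fun i => h3 _⟩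
    obtain ⟨δ, hδ, hh⟩ := h2 hε
    exact ⟨δ, hδ, fun i => hh (i + k)⟩
  have hPU : UniformIntegrable P 1 μ := by
    refine ui_dom μ _ P hF' (fun i => (hPm i).aestronglyMeasurable) (fun i ω => ?_)
    simp only [hP, F, Real.norm_eq_abs]
    rw [Finset.prod_range_succ, abs_mul, abs_mul]
    refine mul_le_mul_of_nonneg_right ?_ (abs_nonneg _)
    rw [Finset.abs_prod]
    refine le_trans (Finset.prod_le_prod (fun _ _ => abs_nonneg _)
        (fun j hj => hC j (Finset.mem_range.1 hj) _)) (le_abs_self _)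
  have hU := uniformIntegrable_average_real le_rfl hPU
  have hlim : ∀ᵐ ω ∂μ, Tendsto (fun n : ℕ => ((∑ i ∈ Finset.range n, P i) / (n : Ω → ℝ)) ω) atTop
      (𝓝 (W ω)) := by
    filter_upwards [hV] with ω h
    refine h.congr fun n => ?_
    simp [hP]
  have hW := hU.memLp_of_ae_tendsto hlim
  have h1 := tendsto_Lp_finite_of_tendsto_ae le_rfl (by simp) hU.1 hW hU.2.1 hlim
  have h2 := (ENNReal.tendsto_toReal (ENNReal.zero_ne_top)).comp h1
  rw [ENNReal.toReal_zero] at h2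
  refine h2.congr fun n => ?_
  have hi : Integrable ((∑ i ∈ Finset.range n, P i) / (n : Ω → ℝ) - W) μ :=
    memLp_one_iff_integrable.1 ((hU.memLp n).sub hW)
  simp only [Function.comp_apply]
  rw [eLpNorm_one_eq_lintegral_enorm, ← integral_norm_eq_lintegral_enorm hi.1]
  refine integral_congr_ae (ae_of_all _ fun ω => ?_)
  simp [hP, Real.norm_eq_abs]

end CIDaux

/-- Generalized SLLN for products: if `(X n)` is c.i.d., `f 0, …, f (k-1)` are measurable
with `E|f j (X 1)| < ∞`, and all but possibly the last are bounded, then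
`(1/n) ∑_{i=0}^{n-1} ∏_j f j (X (i + j + 1)) → ∏_j V (f j)` a.s. and in `L¹`. -/
theorem stmt11 {Ω E : Type*} {mΩ : MeasurableSpace Ω} [MeasurableSpace E]
    (μ : Measure Ω) [IsProbabilityMeasure μ] (X : ℕ → Ω → E)
    (hX : ∀ n, Measurable (X n))
    (hcid : IsCIDnat μ X)
    (𝒢 : Filtration ℕ mΩ)
    (h𝒢 : ∀ n, 𝒢 n = ⨆ i ∈ Set.Icc 1 n, MeasurableSpace.comap (X i) inferInstance)
    (k : ℕ) (hk : 1 ≤ k) (f : Fin k → E → ℝ)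
    (hf : ∀ j, Measurable (f j))
    (hint : ∀ j, Integrable (fun ω => f j (X 1 ω)) μ)
    (hbd : ∀ j : Fin k, (j : ℕ) < k - 1 → ∃ C, ∀ x, |f j x| ≤ C)
    (V : Fin k → Ω → ℝ)
    (hV : ∀ j, ∀ᵐ ω ∂μ, Tendsto (fun n => (μ[(fun ω' => f j (X (n + 1) ω')) | 𝒢 n]) ω)
      atTop (nhds (V j ω))) :
    (∀ᵐ ω ∂μ, Tendsto
        (fun n => (∑ i ∈ Finset.range n, ∏ j, f j (X (i + (j : ℕ) + 1) ω)) / (n : ℝ))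
        atTop (nhds (∏ j, V j ω))) ∧
    Tendsto (fun n =>
        ∫ ω, |(∑ i ∈ Finset.range n, ∏ j, f j (X (i + (j : ℕ) + 1) ω)) / (n : ℝ)
          - ∏ j, V j ω| ∂μ)
      atTop (nhds 0) := by
  obtain ⟨m, rfl⟩ : ∃ m, k = m + 1 := ⟨k - 1, by omega⟩
  let f' : ℕ → E → ℝ := fun j => if h : j < m + 1 then f ⟨j, h⟩ else 0
  let V' : ℕ → Ω → ℝ := fun j => if h : j < m + 1 then V ⟨j, h⟩ else 0
  have ef : ∀ j (h : j < m + 1), f' j = f ⟨j, h⟩ := fun j h => dif_pos h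
  have eV : ∀ j (h : j < m + 1), V' j = V ⟨j, h⟩ := fun j h => dif_pos h
  have hf' : ∀ j, Measurable (f' j) := by
    intro j
    by_cases h : j < m + 1
    · rw [ef j h]; exact hf _
    · have : f' j = 0 := dif_neg h
      rw [this]; exact measurable_const
  have hae := CIDaux.main_ae μ X hX hcid 𝒢 h𝒢 f' hf' V' (m + 1)
    (fun j h => by rw [ef j h]; exact hint _)
    (fun j h => by rw [ef j (by omega)]; exact hbd _ (by simp only; omega))
    (fun j h => by rw [ef j h, eV j h]; exact hV _)
  have hL1 := CIDaux.main_L1 μ X hX hcid f' hf' _ m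
    (by rw [ef m (by omega)]; exact hint _)
    (fun j h => by rw [ef j (by omega)]; exact hbd _ (by simp only; omega)) hae
  have e1 : ∀ i ω, ∏ j ∈ Finset.range (m + 1), f' j (X (i + j + 1) ω)
      = ∏ j : Fin (m + 1), f j (X (i + (j : ℕ) + 1) ω) := by
    intro i ω
    rw [Finset.prod_range]
    exact Finset.prod_congr rfl (fun j _ => by rw [ef j j.2])
  have e2 : ∀ ω, ∏ j ∈ Finset.range (m + 1), V' j ω = ∏ j : Fin (m + 1), V j ω := by
    intro ω
    rw [Finset.prod_range]
    exact Finset.prod_congr rfl (fun j _ => by rw [eV j j.2])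
  simp only [e1, e2] at hae hL1
  exact ⟨hae, hL1⟩
end

section
/- If (X_n) is c.i.d. with values in a Polish space E, then its distribution λ on E^∞ coincides on the σ-field V with the exchangeable law μ(·) = ∫ α^∞(ω)(·) P(dω), where α is the directing measure and V is the σ-field on E^∞ generated by the maps x ↦ limsup_n (1/n)(f(x_1) + ... + f(x_n)) for bounded measurable f : E → ℝ. -/
open MeasureTheory Filter

open ProbabilityTheory

lemma aux_integral_bind {Ω E : Type*} {mΩ : MeasurableSpace Ω} [MeasurableSpace E]
    (μ : Measure Ω) [IsFiniteMeasure μ] (κ : Kernel Ω E) [IsMarkovKernel κ]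
    {f : E → ℝ} (hf : Integrable f (μ.bind κ)) :
    ∫ x, f x ∂(μ.bind κ) = ∫ ω, ∫ x, f x ∂(κ ω) ∂μ := by
  rw [Measure.comp_eq_comp_const_apply] at hf ⊢
  rw [Kernel.integral_comp hf]
  simp

lemma aux_bdd_integrable {Ω : Type*} {mΩ : MeasurableSpace Ω} (μ : Measure Ω) [IsFiniteMeasure μ]
    {f : Ω → ℝ} (hf : Measurable f) {C : ℝ} (hC : ∀ x, |f x| ≤ C) : Integrable f μ :=
  Integrable.of_bound hf.aestronglyMeasurable C (Eventually.of_forall hC)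

lemma aux_bdd_integral {E : Type*} [MeasurableSpace E] (ν : Measure E) [IsProbabilityMeasure ν]
    {f : E → ℝ} {C : ℝ} (hC : ∀ x, |f x| ≤ C) : |∫ x, f x ∂ν| ≤ C := by
  have := norm_integral_le_of_norm_le_const (μ := ν) (f := f) (C := C) (Eventually.of_forall hC)
  simpa using this

/-- strong law for bounded martingale differences -/
lemma aux_mds {Ω : Type*} {mΩ : MeasurableSpace Ω} (μ : Measure Ω) [IsProbabilityMeasure μ]
    (F : Filtration ℕ mΩ) (D : ℕ → Ω → ℝ) (hD : ∀ n, StronglyMeasurable[F (n+1)] (D n))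
    (C : ℝ) (hC : ∀ n, ∀ᵐ ω ∂μ, |D n ω| ≤ C) (h0 : ∀ n, μ[D n | F n] =ᵐ[μ] 0) :
    ∀ᵐ ω ∂μ, Tendsto (fun n : ℕ => (∑ i ∈ Finset.range n, D i ω) / (n:ℝ)) atTop (nhds 0) := by
  set M : ℕ → Ω → ℝ := fun n ω => ∑ i ∈ Finset.range n, D i ω / ((i:ℝ)+1) with hM
  have hDm : ∀ n, MemLp (D n) ⊤ μ := fun n =>
    memLp_top_of_bound ((hD n).mono (F.le _)).aestronglyMeasurable C (hC n)
  have hMm : ∀ n, MemLp (M n) ⊤ μ := fun n =>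
    memLp_finsetSum (Finset.range n) fun i _ => by
      simpa [div_eq_inv_mul] using (hDm i).const_mul ((i:ℝ)+1)⁻¹
  have hMi : ∀ n, Integrable (M n) μ := fun n => (hMm n).integrable le_top
  have hDi : ∀ n, Integrable (D n) μ := fun n => (hDm n).integrable le_top
  have hMs : ∀ n, StronglyMeasurable[F n] (M n) := fun n =>
    Finset.stronglyMeasurable_fun_sum _ fun i hi => by
      have := ((hD i).mono (F.mono (Finset.mem_range.1 hi))).const_mul ((i:ℝ)+1)⁻¹
      simpa [div_eq_inv_mul] using this
  have hsucc : ∀ n ω, M (n+1) ω = M n ω + D n ω / ((n:ℝ)+1) := fun n ω => by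
    simp [hM, Finset.sum_range_succ]
  have hmart : Martingale M F μ := by
    refine martingale_of_condExp_sub_eq_zero_nat hMs hMi fun n => ?_
    have : M (n+1) - M n = (((n:ℝ)+1)⁻¹) • D n := by
      ext ω; simp [hsucc, div_eq_inv_mul]
    rw [this]
    filter_upwards [condExp_smul (((n:ℝ)+1)⁻¹) (D n) (F n) (μ := μ), h0 n] with ω h1 h2
    rw [h1]; simp [h2]
  have hMDi : ∀ n, Integrable (M n * D n) μ := fun n =>
    ((hDm n).mul (hMm n) (r := ⊤)).integrable le_top
  have hMMi : ∀ n, Integrable (fun ω => M n ω ^ 2) μ := fun n => by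
    have := ((hMm n).mul (hMm n) (r := ⊤)).integrable le_top
    refine this.congr (Eventually.of_forall fun ω => ?_)
    simp [sq]
  have hDDi : ∀ n, Integrable (fun ω => D n ω ^ 2) μ := fun n => by
    have := ((hDm n).mul (hDm n) (r := ⊤)).integrable le_top
    refine this.congr (Eventually.of_forall fun ω => ?_)
    simp [sq]
  have horth : ∀ n, ∫ ω, M n ω * D n ω ∂μ = 0 := fun n => by
    have h1 := condExp_mul_of_stronglyMeasurable_left (hMs n) (hMDi n) (hDi n)
    have h2 : ∫ ω, (M n * D n) ω ∂μ = ∫ ω, (μ[M n * D n | F n]) ω ∂μ :=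
      (integral_condExp (F.le n)).symm
    have h3 : ∫ ω, (μ[M n * D n | F n]) ω ∂μ = ∫ ω, (0:ℝ) ∂μ := by
      refine integral_congr_ae ?_
      filter_upwards [h1, h0 n] with ω h1 h2
      rw [h1]; simp [h2]
    simpa using h2.trans h3
  have hDD : ∀ n, ∫ ω, D n ω ^ 2 ∂μ ≤ C ^ 2 := fun n => by
    have : ∫ ω, D n ω ^ 2 ∂μ ≤ ∫ ω, C ^ 2 ∂μ := by
      refine integral_mono_ae (hDDi n) (integrable_const _) ?_
      filter_upwards [hC n] with ω h
      exact sq_le_sq' (abs_le.1 h).1 (abs_le.1 h).2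
    simpa using this
  have hbd : ∀ n, ∫ ω, M n ω ^ 2 ∂μ ≤ C ^ 2 * (2 - 2 / ((n:ℝ)+1)) := by
    intro n
    induction n with
    | zero => simp [hM]
    | succ n ih =>
      have hexp : ∫ ω, M (n+1) ω ^ 2 ∂μ = ∫ ω, M n ω ^ 2 ∂μ + (2 / ((n:ℝ)+1)) * ∫ ω, M n ω * D n ω ∂μ
          + (1 / ((n:ℝ)+1))^2 * ∫ ω, D n ω ^ 2 ∂μ := by
        rw [← integral_const_mul, ← integral_const_mul, ← integral_add (hMMi n), ← integral_add]
        · refine integral_congr_ae (Eventually.of_forall fun ω => ?_)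
          simp only [hsucc]; ring
        · exact (hMMi n).add ((hMDi n).const_mul _)
        · exact (hDDi n).const_mul _
        · exact (hMDi n).const_mul _
      rw [hexp, horth]
      have h1 : C ^ 2 * (1 / ((n:ℝ)+1))^2 ≥ (1 / ((n:ℝ)+1))^2 * ∫ ω, D n ω ^ 2 ∂μ := by
        rw [mul_comm]
        exact mul_le_mul_of_nonneg_left (hDD n) (by positivity)
      have h2 : (1 / ((n:ℝ)+1))^2 ≤ 2 / ((n:ℝ)+1) - 2 / (((n+1:ℕ):ℝ)+1) := by
        have e : 2 / ((n:ℝ)+1) - 2 / (((n+1:ℕ):ℝ)+1) - (1 / ((n:ℝ)+1))^2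
            = n / (((n:ℝ)+1)^2 * ((n:ℝ)+2)) := by
          push_cast
          field_simp
          ring
        have : (0:ℝ) ≤ n / (((n:ℝ)+1)^2 * ((n:ℝ)+2)) := by positivity
        linarith
      have h3 := mul_le_mul_of_nonneg_left h2 (sq_nonneg C)
      linarith
  have hconv := hmart.submartingale.exists_ae_tendsto_of_bdd (R := (1 + 2 * C^2).toNNReal) fun n => by
    rw [eLpNorm_one_eq_lintegral_enorm, ← ofReal_integral_norm_eq_lintegral_enorm (hMi n)]
    refine ENNReal.ofReal_le_ofReal ?_
    have : ∫ ω, ‖M n ω‖ ∂μ ≤ ∫ ω, (1 + M n ω ^ 2) ∂μ := by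
      refine integral_mono (hMi n).norm ((integrable_const _).add (hMMi n)) fun ω => ?_
      simp only [Real.norm_eq_abs]
      nlinarith [sq_abs (M n ω), sq_nonneg (|M n ω| - 1), abs_nonneg (M n ω)]
    rw [integral_add (integrable_const _) (hMMi n)] at this
    simp at this
    have h2 := hbd n
    have h3 : C ^ 2 * (2 - 2 / ((n:ℝ)+1)) ≤ 2 * C^2 := by
      have : 0 ≤ 2 / ((n:ℝ)+1) := by positivity
      nlinarith [sq_nonneg C]
    simp only [Real.norm_eq_abs]
    linarith
  filter_upwards [hconv] with ω ⟨c, hc⟩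
  have hk : ∀ n : ℕ, ∑ i ∈ Finset.range n, D i ω = n * M n ω - ∑ i ∈ Finset.range n, M i ω := by
    intro n
    induction n with
    | zero => simp
    | succ n ih =>
      rw [Finset.sum_range_succ, Finset.sum_range_succ, ih, hsucc]
      have : (n:ℝ)+1 ≠ 0 := by positivity
      push_cast
      field_simp
      ring
  have := hc.sub hc.cesaro
  rw [sub_self] at this
  refine this.congr' ?_
  filter_upwards [eventually_gt_atTop 0] with n hn
  have : (n:ℝ) ≠ 0 := by positivity
  rw [hk]
  field_simp

lemma aux_strong {E : Type*} [MeasurableSpace E] (a : Measure E) [IsProbabilityMeasure a]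
    (ν : Measure (ℕ → E))
    (h : ∀ (n : ℕ) (B : Fin n → Set E), (∀ i, MeasurableSet (B i)) →
      ν {x : ℕ → E | ∀ i : Fin n, x (i : ℕ) ∈ B i} = ∏ i, a (B i))
    {f : E → ℝ} (hf : Measurable f) {C : ℝ} (hC : ∀ x, |f x| ≤ C) :
    ∀ᵐ x ∂ν, Tendsto (fun n : ℕ => (∑ i ∈ Finset.range n, f (x i)) / (n:ℝ)) atTop
      (nhds (∫ y, f y ∂a)) := by
  have hν : ν = Measure.infinitePi (fun _ : ℕ => a) := by
    classical
    refine Measure.eq_infinitePi _ fun s t ht => ?_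
    obtain ⟨n, hn⟩ : ∃ n, ∀ i ∈ s, i < n := ⟨s.sup id + 1, fun i hi =>
      Nat.lt_succ_of_le (Finset.le_sup (f := id) hi)⟩
    have := h n (fun i => if (i:ℕ) ∈ s then t i else Set.univ) (fun i => by
      split_ifs
      · exact ht _
      · exact .univ)
    have e : {x : ℕ → E | ∀ i : Fin n, x (i : ℕ) ∈ (if (i:ℕ) ∈ s then t i else Set.univ)}
        = Set.pi s t := by
      ext x
      simp only [Set.mem_ofPred_eq, Set.mem_pi, Finset.mem_coe]
      constructor
      · intro hx i hi
        have := hx ⟨i, hn i hi⟩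
        simpa [hi] using this
      · intro hx i
        split_ifs with hi
        · exact hx _ hi
        · trivial
    rw [e] at this
    rw [this, Fin.prod_univ_eq_prod_range (fun i => a (if i ∈ s then t i else Set.univ)) n]
    symm
    have hsub : s ⊆ Finset.range n := fun i hi => Finset.mem_range.2 (hn i hi)
    rw [← Finset.prod_subset hsub (f := fun i => a (if i ∈ s then t i else Set.univ))]
    · exact Finset.prod_congr rfl fun i hi => by simp [hi]
    · intro i _ hi; simp [hi]
  subst hν
  have hi := iIndepFun_infinitePi (P := fun _ : ℕ => a) (X := fun _ : ℕ => f) (fun _ => hf)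
  have hid : ∀ i, Measure.map (fun x : ℕ → E => f (x i)) (Measure.infinitePi (fun _ : ℕ => a)) = a.map f := by
    intro i
    have h1 := Measure.map_map (μ := Measure.infinitePi (fun _ : ℕ => a)) hf
      (measurable_pi_apply (X := fun _ : ℕ => E) i)
    have h2 := Measure.infinitePi_map_eval (fun _ : ℕ => a) i
    rw [h2] at h1
    exact h1.symm
  have := strong_law_ae_real (μ := Measure.infinitePi (fun _ : ℕ => a))
    (fun i x => f (x i)) (aux_bdd_integrable _ (hf.comp (measurable_pi_apply 0)) (fun x => hC _))
    (fun i j hij => hi.indepFun hij)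
    (fun i => ⟨(hf.comp (measurable_pi_apply i)).aemeasurable,
      (hf.comp (measurable_pi_apply 0)).aemeasurable, by rw [hid, hid]⟩)
  have e : ∫ x, f (x 0) ∂(Measure.infinitePi (fun _ : ℕ => a)) = ∫ y, f y ∂a := by
    have := (measurePreserving_eval_infinitePi (fun _ : ℕ => a) 0).map_eq
    conv_rhs => rw [← this]
    rw [integral_map (measurable_pi_apply 0).aemeasurable hf.aestronglyMeasurable]
  rwa [e] at this

lemma aux_cid1 {Ω E : Type*} {mΩ : MeasurableSpace Ω} [MeasurableSpace E]
    (μ : Measure Ω) (X : ℕ → Ω → E) (hX : ∀ n, Measurable (X n)) (hcid : IsCIDnat μ X)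
    (𝒢 : Filtration ℕ mΩ)
    (h𝒢 : ∀ n, 𝒢 n = ⨆ i ∈ Set.Icc 1 n, MeasurableSpace.comap (X i) inferInstance)
    (n : ℕ) (A : Set Ω) (hA : MeasurableSet[𝒢 n] A) :
    (μ.restrict A).map (X (n+2)) = (μ.restrict A).map (X (n+1)) := by
  have hle : 𝒢 n ≤ MeasurableSpace.comap (fun ω (i : Fin n) => X ((i:ℕ)+1) ω) inferInstance := by
    rw [h𝒢]
    refine iSup₂_le fun i hi => ?_
    have hi' : i - 1 < n := by have := hi.1; have := hi.2; omega
    have : X i = (fun y : Fin n → E => y ⟨i-1, hi'⟩) ∘ (fun ω (i : Fin n) => X ((i:ℕ)+1) ω) := by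
      ext ω
      simp [Nat.sub_add_cancel hi.1]
    rw [this, ← MeasurableSpace.comap_comp]
    exact MeasurableSpace.comap_mono (measurable_pi_apply _).comap_le
  obtain ⟨S, hS, rfl⟩ := hle A hA
  ext B hB
  have hT : MeasurableSet {y : Fin (n+1) → E | (fun i : Fin n => y i.castSucc) ∈ S ∧
      y (Fin.last n) ∈ B} := by
    refine MeasurableSet.inter ?_ ?_
    · exact (measurable_pi_lambda _ fun i => measurable_pi_apply _) hS
    · exact (measurable_pi_apply _) hB
  have h := congrArg (fun ν => ν {y : Fin (n+1) → E | (fun i : Fin n => y i.castSucc) ∈ S ∧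
      y (Fin.last n) ∈ B}) (hcid n)
  rw [Measure.map_apply _ hT, Measure.map_apply _ hT] at h
  · rw [Measure.map_apply (hX _) hB, Measure.map_apply (hX _) hB,
      Measure.restrict_apply (hX _ hB), Measure.restrict_apply (hX _ hB)]
    convert h using 2
    · ext ω; simp [and_comm]
    · ext ω; simp [and_comm]
  · exact measurable_pi_lambda _ fun i => hX _
  · refine measurable_pi_lambda _ fun i => ?_
    split_ifs
    · exact hX _
    · exact hX _

lemma aux_cid2 {Ω E : Type*} {mΩ : MeasurableSpace Ω}
    [TopologicalSpace E] [PolishSpace E] [MeasurableSpace E] [BorelSpace E]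
    (μ : Measure Ω) [IsProbabilityMeasure μ] (X : ℕ → Ω → E)
    (hX : ∀ n, Measurable (X n)) (hcid : IsCIDnat μ X)
    (𝒢 : Filtration ℕ mΩ)
    (h𝒢 : ∀ n, 𝒢 n = ⨆ i ∈ Set.Icc 1 n, MeasurableSpace.comap (X i) inferInstance)
    (κ : Kernel Ω E) [IsMarkovKernel κ]
    (hα : ∀ f : BoundedContinuousFunction E ℝ, ∀ᵐ ω ∂μ,
      Tendsto (fun n => (μ[(fun ω' => f (X (n + 1) ω')) | 𝒢 n]) ω)
        atTop (nhds (∫ x, f x ∂(κ ω))))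
    (n : ℕ) (A : Set Ω) (hA : MeasurableSet[𝒢 n] A) :
    (μ.restrict A).map (X (n+1)) = (μ.restrict A).bind κ := by
  have hconst : ∀ k, (μ.restrict A).map (X (n+k+1)) = (μ.restrict A).map (X (n+1)) := by
    intro k
    induction k with
    | zero => rfl
    | succ k ih =>
      rw [← ih]
      exact aux_cid1 μ X hX hcid 𝒢 h𝒢 (n+k) A (𝒢.mono (Nat.le_add_right n k) A hA)
  have : IsFiniteMeasure ((μ.restrict A).map (X (n+1))) := Measure.isFiniteMeasure_map _ _
  refine ext_of_forall_integral_eq_of_IsFiniteMeasure fun f => ?_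
  have hfb : ∀ x, |f x| ≤ ‖f‖ := fun x => f.norm_coe_le_norm x
  have hfm : Measurable f := f.continuous.measurable
  rw [aux_integral_bind _ _ (aux_bdd_integrable _ hfm hfb)]
  have hlim : Tendsto (fun k => ∫ ω in A, (μ[(fun ω' => f (X (n + k + 1) ω')) | 𝒢 (n+k)]) ω ∂μ) atTop
      (nhds (∫ ω in A, ∫ x, f x ∂(κ ω) ∂μ)) := by
    refine tendsto_integral_of_dominated_convergence (fun _ => ‖f‖) (fun k => ?_)
      (integrable_const _) (fun k => ?_) ?_
    · exact integrable_condExp.integrableOn.aestronglyMeasurable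
    · exact ae_restrict_of_ae (ae_bdd_condExp_of_ae_bdd (R := ‖f‖₊)
        (Eventually.of_forall fun ω => hfb _))
    · refine ae_restrict_of_ae ?_
      filter_upwards [hα f] with ω hω
      have := (tendsto_add_atTop_iff_nat n).2 hω
      simpa only [add_comm n] using this
  have hc : ∀ k, ∫ ω in A, (μ[(fun ω' => f (X (n + k + 1) ω')) | 𝒢 (n+k)]) ω ∂μ
      = ∫ x, f x ∂((μ.restrict A).map (X (n+1))) := by
    intro k
    rw [setIntegral_condExp (𝒢.le _) (f := fun ω' => f (X (n + k + 1) ω'))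
      (aux_bdd_integrable _ (hfm.comp (hX _)) (fun _ => hfb _))
      (𝒢.mono (Nat.le_add_right n k) A hA), ← hconst k,
      integral_map (hX _).aemeasurable hfm.aestronglyMeasurable]
  simp_rw [hc] at hlim
  exact tendsto_nhds_unique tendsto_const_nhds hlim

lemma aux_meas {Ω E : Type*} (m : MeasurableSpace Ω) {mΩ : MeasurableSpace Ω}
    [TopologicalSpace E] [PolishSpace E] [MeasurableSpace E] [BorelSpace E]
    (μ : Measure Ω) [IsProbabilityMeasure μ] (hm : m ≤ mΩ)
    (κ : Kernel Ω E) [IsMarkovKernel κ]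
    (hα : ∀ f : BoundedContinuousFunction E ℝ,
      AEStronglyMeasurable[m] (fun ω => ∫ x, f x ∂(κ ω)) μ)
    {f : E → ℝ} (hf : Measurable f) {C : ℝ} (hC : ∀ x, |f x| ≤ C) :
    μ[fun ω => ∫ x, f x ∂(κ ω) | m] =ᵐ[μ] fun ω => ∫ x, f x ∂(κ ω) := by
  let _ := TopologicalSpace.upgradeIsCompletelyMetrizable E
  have hbm : ∀ {g : E → ℝ} (_ : Measurable g) {C : ℝ} (_ : ∀ x, |g x| ≤ C),
      Integrable (fun ω => ∫ x, g x ∂(κ ω)) μ := fun {g} hg {C} hC =>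
    aux_bdd_integrable μ (hg.stronglyMeasurable.integral_kernel (κ := κ)).measurable
      (fun ω => aux_bdd_integral _ hC)
  set u : Ω → ℝ := fun ω => ∫ x, f x ∂(κ ω) with hu
  have hui : Integrable u μ := hbm hf hC
  have key : ∀ ε > 0, ∫ ω, |(μ[u | m]) ω - u ω| ∂μ ≤ 2 * ε := by
    intro ε hε
    obtain ⟨g, hg, -⟩ := (aux_bdd_integrable (μ.bind κ) hf hC).exists_boundedContinuous_integral_sub_le hε
    set v : Ω → ℝ := fun ω => ∫ x, g x ∂(κ ω) with hv
    have hgm : Measurable g := g.continuous.measurable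
    have hgb : ∀ x, |g x| ≤ ‖g‖ := fun x => g.norm_coe_le_norm x
    have hvi : Integrable v μ := hbm hgm hgb
    have hvc : μ[v | m] =ᵐ[μ] v := condExp_of_aestronglyMeasurable' hm (hα g) hvi
    have huv : ∫ ω, |u ω - v ω| ∂μ ≤ ε := by
      have hdb : ∀ x, |‖f x - g x‖| ≤ C + ‖g‖ := fun x => by
        rw [abs_norm]
        exact (norm_sub_le _ _).trans (add_le_add (hC x) (hgb x))
      refine le_trans ?_ hg
      rw [aux_integral_bind (f := fun x => ‖f x - g x‖) _ _
        (aux_bdd_integrable _ (hf.sub hgm).norm hdb)]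
      refine integral_mono (hui.sub hvi).abs (hbm (hf.sub hgm).norm hdb) fun ω => ?_
      simp only [hu, hv]
      rw [← integral_sub (aux_bdd_integrable _ hf hC) (aux_bdd_integrable _ hgm hgb)]
      exact norm_integral_le_integral_norm (fun x => f x - g x)
    have h1 : ∫ ω, |(μ[u - v | m]) ω| ∂μ ≤ ε := (integral_abs_condExp_le _).trans huv
    have h2 : ∫ ω, |(μ[u | m]) ω - u ω| ∂μ ≤ ∫ ω, (|(μ[u - v | m]) ω| + |u ω - v ω|) ∂μ := by
      refine integral_mono_ae (integrable_condExp.sub hui).abs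
        (integrable_condExp.abs.add (hui.sub hvi).abs) ?_
      filter_upwards [condExp_sub hui hvi m, hvc] with ω h1 h2
      simp only [h1, Pi.sub_apply, h2]
      have e : (μ[u | m]) ω - u ω = ((μ[u | m]) ω - v ω) - (u ω - v ω) := by ring
      rw [e]
      exact abs_sub _ _
    have h3 : ∫ ω, (|(μ[u - v | m]) ω| + |u ω - v ω|) ∂μ
        = ∫ ω, |(μ[u - v | m]) ω| ∂μ + ∫ ω, |u ω - v ω| ∂μ :=
      integral_add integrable_condExp.abs (hui.sub hvi).abs
    linarith
  have h0 : ∫ ω, |(μ[u | m]) ω - u ω| ∂μ = 0 := by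
    refine le_antisymm (le_of_forall_pos_le_add fun ε hε => ?_) (integral_nonneg fun _ => abs_nonneg _)
    have := key (ε/2) (by positivity)
    linarith
  have := (integral_eq_zero_iff_of_nonneg (fun _ => abs_nonneg _) (integrable_condExp.sub hui).abs).1 h0
  filter_upwards [this] with ω h
  simpa [sub_eq_zero] using h

lemma aux_lln {Ω E : Type*} {mΩ : MeasurableSpace Ω}
    [TopologicalSpace E] [PolishSpace E] [MeasurableSpace E] [BorelSpace E]
    (μ : Measure Ω) [IsProbabilityMeasure μ] (X : ℕ → Ω → E)
    (hX : ∀ n, Measurable (X n)) (hcid : IsCIDnat μ X)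
    (𝒢 : Filtration ℕ mΩ)
    (h𝒢 : ∀ n, 𝒢 n = ⨆ i ∈ Set.Icc 1 n, MeasurableSpace.comap (X i) inferInstance)
    (κ : Kernel Ω E) [IsMarkovKernel κ]
    (hα : ∀ f : BoundedContinuousFunction E ℝ, ∀ᵐ ω ∂μ,
      Tendsto (fun n => (μ[(fun ω' => f (X (n + 1) ω')) | 𝒢 n]) ω)
        atTop (nhds (∫ x, f x ∂(κ ω))))
    {f : E → ℝ} (hf : Measurable f) {C : ℝ} (hC : ∀ x, |f x| ≤ C) :
    ∀ᵐ ω ∂μ, Tendsto (fun n : ℕ => (∑ i ∈ Finset.range n, f (X (i+1) ω)) / (n:ℝ)) atTop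
      (nhds (∫ y, f y ∂(κ ω))) := by
  set u : Ω → ℝ := fun ω => ∫ x, f x ∂(κ ω) with hu
  have hui : Integrable u μ :=
    aux_bdd_integrable μ hf.stronglyMeasurable.integral_kernel.measurable
      (fun ω => aux_bdd_integral _ hC)
  have hfi : ∀ n, Integrable (fun ω => f (X n ω)) μ := fun n =>
    aux_bdd_integrable _ (hf.comp (hX _)) (fun _ => hC _)
  have hce : ∀ n, μ[(fun ω => f (X (n+1) ω)) | 𝒢 n] =ᵐ[μ] μ[u | 𝒢 n] := by
    intro n
    refine ae_eq_condExp_of_forall_setIntegral_eq (𝒢.le n) hui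
      (fun s _ _ => integrable_condExp.integrableOn) (fun s hs _ => ?_)
      stronglyMeasurable_condExp.aestronglyMeasurable
    rw [setIntegral_condExp (𝒢.le n) (hfi _) hs,
      ← integral_map (hX (n+1)).aemeasurable hf.aestronglyMeasurable,
      aux_cid2 μ X hX hcid 𝒢 h𝒢 κ hα n s hs,
      aux_integral_bind _ _ (aux_bdd_integrable _ hf hC)]
  have hV : ∀ᵐ ω ∂μ, Tendsto (fun n => (μ[(fun ω' => f (X (n + 1) ω')) | 𝒢 n]) ω) atTop
      (nhds (u ω)) := by
    have hmeas := aux_meas (⨆ n, 𝒢 n) μ (iSup_le fun n => 𝒢.le n) κ (fun g => by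
      refine ⟨fun ω => limsup (fun n => (μ[(fun ω' => g (X (n + 1) ω')) | 𝒢 n]) ω) atTop,
        (Measurable.limsup fun n => (stronglyMeasurable_condExp.mono
          (le_iSup (fun n => 𝒢 n) n)).measurable).stronglyMeasurable, ?_⟩
      filter_upwards [hα g] with ω h using h.limsup_eq.symm) hf hC
    filter_upwards [hmeas, tendsto_ae_condExp (ℱ := 𝒢) u, ae_all_iff.2 hce] with ω h1 h2 h3
    rw [h1] at h2
    exact h2.congr fun n => (h3 n).symm
  have hXs : ∀ n, Measurable[𝒢 (n+1)] (X (n+1)) := fun n => by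
    rw [h𝒢]
    exact Measurable.mono (comap_measurable (X (n+1)))
      (le_iSup₂_of_le (n+1) ⟨by omega, le_rfl⟩ le_rfl) le_rfl
  have hC0 : 0 ≤ C := by
    obtain ⟨ω⟩ := (inferInstance : (ae μ).NeBot).nonempty
    exact (abs_nonneg _).trans (hC (X 0 ω))
  have hD := aux_mds μ 𝒢 (fun n ω => f (X (n+1) ω) - (μ[(fun ω' => f (X (n + 1) ω')) | 𝒢 n]) ω)
    (fun n => (hf.comp (hXs n)).stronglyMeasurable.sub
      (stronglyMeasurable_condExp.mono (𝒢.mono (Nat.le_succ n)))) (C + C)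
    (fun n => by
      filter_upwards [ae_bdd_condExp_of_ae_bdd (m := 𝒢 n) (μ := μ) (R := C.toNNReal)
        (f := fun ω' => f (X (n + 1) ω'))
        (Eventually.of_forall fun ω => by rw [Real.coe_toNNReal _ hC0]; exact hC _)] with ω h
      rw [Real.coe_toNNReal _ hC0] at h
      exact (abs_sub _ _).trans (add_le_add (hC _) h))
    (fun n => by
      have h1 := condExp_sub (hfi (n+1)) (integrable_condExp (m := 𝒢 n) (f := fun ω' => f (X (n + 1) ω'))) (𝒢 n)
      refine h1.trans ?_
      rw [condExp_of_stronglyMeasurable (𝒢.le n) stronglyMeasurable_condExp integrable_condExp]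
      simp)
  filter_upwards [hD, hV] with ω h1 h2
  have := h1.add h2.cesaro
  rw [zero_add] at this
  refine this.congr fun n => ?_
  rw [Finset.sum_sub_distrib]
  ring

/-- If `(X n)` is c.i.d. with values in a Polish space, then its distribution `λ` on
`E^∞` coincides, on the σ-field `𝒱` generated by the maps
`x ↦ limsup (1/n) (f x₁ + ⋯ + f xₙ)` for bounded measurable `f`, with the exchangeable
law `μ*(·) = ∫ α^∞(ω)(·) dP(ω)`, where `α` is the directing measure. -/
theorem stmt14 {Ω E : Type*} {mΩ : MeasurableSpace Ω}
    [TopologicalSpace E] [PolishSpace E] [MeasurableSpace E] [BorelSpace E]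
    (μ : Measure Ω) [IsProbabilityMeasure μ] (X : ℕ → Ω → E)
    (hX : ∀ n, Measurable (X n))
    (hcid : IsCIDnat μ X)
    (𝒢 : Filtration ℕ mΩ)
    (h𝒢 : ∀ n, 𝒢 n = ⨆ i ∈ Set.Icc 1 n, MeasurableSpace.comap (X i) inferInstance)
    -- `α` is the directing measure of `(X n)`
    (α : Ω → Measure E) (hαprob : ∀ ω, IsProbabilityMeasure (α ω))
    (hαmeas : ∀ B : Set E, MeasurableSet B → Measurable fun ω => α ω B)
    (hα : ∀ f : BoundedContinuousFunction E ℝ, ∀ᵐ ω ∂μ,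
      Tendsto (fun n => (μ[(fun ω' => f (X (n + 1) ω')) | 𝒢 n]) ω)
        atTop (nhds (∫ x, f x ∂(α ω))))
    -- `αinf ω` is the countable product `(α ω)^∞`
    (αinf : Ω → Measure (ℕ → E)) (hαinfprob : ∀ ω, IsProbabilityMeasure (αinf ω))
    (hαinf : ∀ ω (n : ℕ) (B : Fin n → Set E), (∀ i, MeasurableSet (B i)) →
      αinf ω {x : ℕ → E | ∀ i : Fin n, x (i : ℕ) ∈ B i} = ∏ i, α ω (B i))
    -- the σ-field `𝒱` on `E^∞`
    (𝒱 : MeasurableSpace (ℕ → E))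
    (h𝒱 : 𝒱 = ⨆ f : {f : E → ℝ // Measurable f ∧ ∃ C, ∀ x, |f x| ≤ C},
      MeasurableSpace.comap
        (fun x : ℕ → E =>
          Filter.limsup (fun n => (∑ i ∈ Finset.range n, (f : E → ℝ) (x i)) / (n : ℝ))
            atTop)
        inferInstance) :
    ∀ A : Set (ℕ → E), MeasurableSet[𝒱] A →
      Measure.map (fun ω (i : ℕ) => X (i + 1) ω) μ A = ∫⁻ ω, αinf ω A ∂μ := by
  classical
  set κ : Kernel Ω E := ⟨α, Measure.measurable_of_measurable_coe _ hαmeas⟩ with hκ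
  have : IsMarkovKernel κ := ⟨hαprob⟩
  let P : Set (ℕ → E) → Prop := fun A => MeasurableSet[MeasurableSpace.pi] A ∧ ∃ S : Set Ω, MeasurableSet S ∧
    (∀ᵐ ω ∂μ, (fun i : ℕ => X (i+1) ω) ∈ A ↔ ω ∈ S) ∧
    ∀ ω, ∀ᵐ x ∂(αinf ω), x ∈ A ↔ ω ∈ S
  let m' : MeasurableSpace (ℕ → E) :=
    { MeasurableSet' := P
      measurableSet_empty := ⟨@MeasurableSet.empty _ MeasurableSpace.pi, ∅, .empty, by simp, by simp⟩
      measurableSet_compl := by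
        rintro A ⟨hA, S, hS, h1, h2⟩
        refine ⟨hA.compl, Sᶜ, hS.compl, ?_, fun ω => ?_⟩
        · filter_upwards [h1] with ω h
          simp [h]
        · filter_upwards [h2 ω] with x h
          simp [h]
      measurableSet_iUnion := by
        intro A hA
        choose hm S hS h1 h2 using hA
        refine ⟨.iUnion hm, ⋃ i, S i, .iUnion hS, ?_, fun ω => ?_⟩
        · filter_upwards [ae_all_iff.2 h1] with ω h
          simp [h]
        · filter_upwards [ae_all_iff.2 (fun i => h2 i ω)] with x h
          simp [h] }
  have hle : 𝒱 ≤ m' := by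
    rw [h𝒱]
    refine iSup_le ?_
    rintro ⟨f, hf, C, hC⟩
    rintro _ ⟨B, hB, rfl⟩
    refine ⟨?_, (fun ω => ∫ x, f x ∂(κ ω)) ⁻¹' B,
      hf.stronglyMeasurable.integral_kernel.measurable hB, ?_, fun ω => ?_⟩
    · refine Measurable.limsup (fun n => ?_) hB
      exact (Finset.measurable_fun_sum _ fun i _ => hf.comp (measurable_pi_apply i)).div_const _
    · filter_upwards [aux_lln μ X hX hcid 𝒢 h𝒢 κ hα hf hC] with ω h
      simp only [Set.mem_preimage]
      rw [h.limsup_eq]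
    · filter_upwards [aux_strong (α ω) (αinf ω) (hαinf ω) hf hC] with x h
      simp only [Set.mem_preimage]
      rw [h.limsup_eq]
      rfl
  intro A hA
  obtain ⟨hAm, S, hS, h1, h2⟩ := hle A hA
  have hF : @Measurable _ _ mΩ MeasurableSpace.pi (fun ω (i : ℕ) => X (i + 1) ω) :=
    measurable_pi_lambda _ fun i => hX _
  have hF' : @Measurable _ _ mΩ 𝒱 (fun ω (i : ℕ) => X (i + 1) ω) :=
    hF.mono le_rfl fun B hB => (hle B hB).1
  rw [@Measure.map_apply _ _ mΩ 𝒱 μ _ hF' A hA]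
  have e1 : μ ((fun ω (i : ℕ) => X (i + 1) ω) ⁻¹' A) = μ S :=
    measure_congr (by filter_upwards [h1] with ω h; exact propext h)
  have e2 : ∀ ω, αinf ω A = S.indicator 1 ω := by
    intro ω
    have := hαinfprob ω
    by_cases hω : ω ∈ S
    · rw [Set.indicator_of_mem hω, Pi.one_apply]
      rw [prob_compl_eq_zero_iff hAm |>.1]
      filter_upwards [h2 ω] with x h using by simpa using h.2 hω
    · rw [Set.indicator_of_notMem hω]
      refine measure_eq_zero_iff_ae_notMem.2 ?_
      filter_upwards [h2 ω] with x h using fun hx => hω (h.1 hx)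
  simp_rw [e1, e2]
  rw [lintegral_indicator_one hS]
end

section
/- If for every event H in the shift-invariant σ-field I of (X_n) with P(H) > 0 the sequence (X_n) is c.i.d. under P(·|H), then (X_n) is exchangeable. -/
open MeasureTheory ProbabilityTheory Filter

/-- `(X n)` (indexed from 1) is exchangeable. -/
def IsExchangeable {Ω E : Type*} {mΩ : MeasurableSpace Ω} [MeasurableSpace E]
    (μ : Measure Ω) (X : ℕ → Ω → E) : Prop :=
  ∀ (n : ℕ) (σ : Equiv.Perm (Fin n)),
    Measure.map (fun ω (i : Fin n) => X ((σ i : ℕ) + 1) ω) μ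
      = Measure.map (fun ω (i : Fin n) => X ((i : ℕ) + 1) ω) μ


lemma aux_cesaro {Ω : Type*} {mΩ : MeasurableSpace Ω} (μ : Measure Ω) [IsProbabilityMeasure μ]
    (F : Filtration ℕ mΩ) (u : ℕ → Ω → ℝ) (hb : ∀ k ω, |u k ω| ≤ 1)
    (hm : ∀ k, StronglyMeasurable[F (k+1)] (u k))
    (hc : ∀ k, μ[u (k+1) | F k] =ᵐ[μ] μ[u k | F k]) :
    ∃ φ : ℕ → ℕ, StrictMono φ ∧ ∀ᵐ ω ∂μ, ∃ c, Tendsto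
      (fun j => (φ j : ℝ)⁻¹ * ∑ i ∈ Finset.range (φ j), u i ω) atTop (nhds c) := by
  have hm' : ∀ k, StronglyMeasurable (u k) := fun k => (hm k).mono (F.le _)
  have hint : ∀ k, Integrable (u k) μ := fun k =>
    Integrable.of_bound (hm' k).aestronglyMeasurable 1 (ae_of_all _ (hb k))
  set M : ℕ → Ω → ℝ := fun k => μ[u k | F k] with hM
  have hMmeas : ∀ k, StronglyMeasurable[F k] (M k) := fun k => stronglyMeasurable_condExp
  have hMint : ∀ k, Integrable (M k) μ := fun k => integrable_condExp
  have hmart : Martingale M F μ := by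
    refine martingale_nat hMmeas hMint fun k => ?_
    have h1 : μ[M (k+1) | F k] =ᵐ[μ] μ[u (k+1) | F k] :=
      condExp_condExp_of_le (F.mono (Nat.le_succ k)) (F.le _)
    exact (h1.trans (hc k)).symm
  have hMb : ∀ k, ∀ᵐ ω ∂μ, |M k ω| ≤ 1 := fun k => by
    exact ae_bdd_abs_condExp_of_ae_bdd_abs (m := F k) (R := (1 : ℝ)) (f := u k) (μ := μ)
      (ae_of_all _ (hb k))
  have hMconv : ∀ᵐ ω ∂μ, ∃ c, Tendsto (fun n => M n ω) atTop (nhds c) := by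
    refine hmart.submartingale.exists_ae_tendsto_of_bdd (R := 1) fun n => ?_
    have := eLpNorm_le_of_ae_bound (p := 1) (μ := μ) (f := M n) (C := 1) (hMb n)
    simpa using this
  set D : ℕ → Ω → ℝ := fun k => u k - M k with hD
  have hDmeas : ∀ k, StronglyMeasurable[F (k+1)] (D k) := fun k =>
    (hm k).sub ((hMmeas k).mono (F.mono (Nat.le_succ k)))
  have hDint : ∀ k, Integrable (D k) μ := fun k => (hint k).sub (hMint k)
  have hDb : ∀ k, ∀ᵐ ω ∂μ, |D k ω| ≤ 2 := fun k => by
    filter_upwards [hMb k] with ω hω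
    have := abs_sub (u k ω) (M k ω)
    have h2 := hb k ω
    simp only [hD, Pi.sub_apply]
    linarith
  have hDc : ∀ k, μ[D k | F k] =ᵐ[μ] 0 := fun k => by
    have h1 := condExp_sub (hint k) (hMint k) (F k)
    have h2 : μ[M k | F k] = M k := condExp_of_stronglyMeasurable (F.le k) (hMmeas k) (hMint k)
    filter_upwards [h1] with ω h1
    simp only [hD]
    rw [h1, Pi.sub_apply, h2]
    simp [hM]
  set S : ℕ → Ω → ℝ := fun m ω => ∑ i ∈ Finset.range m, D i ω with hS
  have hSmeas : ∀ m, StronglyMeasurable[F m] (S m) := fun m => by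
    refine Finset.stronglyMeasurable_fun_sum _ fun i hi => ?_
    exact (hDmeas i).mono (F.mono (by simpa using hi))
  have hSb : ∀ m, ∀ᵐ ω ∂μ, |S m ω| ≤ 2 * m := fun m => by
    filter_upwards [ae_all_iff.2 hDb] with ω hω
    calc |S m ω| ≤ ∑ i ∈ Finset.range m, |D i ω| := Finset.abs_sum_le_sum_abs _ _
      _ ≤ ∑ i ∈ Finset.range m, 2 := Finset.sum_le_sum fun i _ => hω i
      _ = 2 * m := by simp [mul_comm]
  have hSmeas' : ∀ m, StronglyMeasurable (S m) := fun m => (hSmeas m).mono (F.le _)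
  have hDmeas' : ∀ m, StronglyMeasurable (D m) := fun m => (hDmeas m).mono (F.le _)
  have hSD : ∀ m, Integrable (S m * D m) μ := fun m =>
    (hDint m).bdd_mul (c := 2 * m) (hSmeas' m).aestronglyMeasurable (hSb m)
  have hSS : ∀ m, Integrable (fun ω => S m ω ^ 2) μ := fun m => by
    refine Integrable.of_bound ((hSmeas' m).pow 2).aestronglyMeasurable ((2 * m)^2) ?_
    filter_upwards [hSb m] with ω hω
    rw [Real.norm_eq_abs, abs_pow]
    gcongr
  have hDD : ∀ m, Integrable (fun ω => D m ω ^ 2) μ := fun m => by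
    refine Integrable.of_bound ((hDmeas' m).pow 2).aestronglyMeasurable (2^2) ?_
    filter_upwards [hDb m] with ω hω
    rw [Real.norm_eq_abs, abs_pow]
    gcongr
  have hSD0 : ∀ m, ∫ ω, S m ω * D m ω ∂μ = 0 := fun m => by
    have h1 := condExp_mul_of_stronglyMeasurable_left (hSmeas m) (hSD m) (hDint m)
    have h2 : ∫ ω, (μ[S m * D m | F m]) ω ∂μ = ∫ ω, (S m * D m) ω ∂μ := integral_condExp (F.le m)
    have h3 : ∫ ω, (μ[S m * D m | F m]) ω ∂μ = 0 := by
      rw [integral_eq_zero_of_ae]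
      filter_upwards [h1, hDc m] with ω h1 h2
      rw [h1, Pi.mul_apply, h2]; simp
    simpa [h3] using h2.symm
  have hSbound : ∀ m, ∫ ω, S m ω ^ 2 ∂μ ≤ 4 * m := by
    intro m
    induction m with
    | zero => simp [hS]
    | succ m ih =>
      have e : (fun ω => S (m+1) ω ^ 2) =
          fun ω => S m ω ^ 2 + 2 * (S m ω * D m ω) + D m ω ^ 2 := by
        funext ω
        simp only [hS, Finset.sum_range_succ]
        ring
      have hSD' : Integrable (fun ω => 2 * (S m ω * D m ω)) μ := (hSD m).const_mul 2
      have hA : Integrable (fun ω => S m ω ^ 2 + 2 * (S m ω * D m ω)) μ := (hSS m).add hSD'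
      rw [e, integral_add hA (hDD m), integral_add (hSS m) hSD',
        integral_const_mul, hSD0]
      have : ∫ ω, D m ω ^ 2 ∂μ ≤ ∫ ω, (4:ℝ) ∂μ := by
        refine integral_mono_ae (hDD m) (integrable_const _) ?_
        filter_upwards [hDb m] with ω hω
        have := abs_le.1 hω
        nlinarith
      simp at this
      push_cast
      linarith
  set T : ℕ → Ω → ℝ := fun m ω => ((m:ℝ)⁻¹ * S m ω)^2 with hT
  have hTm : TendstoInMeasure μ T atTop (0 : Ω → ℝ) := by
    have hTmeas : ∀ m, StronglyMeasurable (T m) := fun m => ((hSmeas' m).const_mul _).pow 2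
    refine tendstoInMeasure_of_tendsto_eLpNorm (p := 1) one_ne_zero
      (fun m => (hTmeas m).aestronglyMeasurable) aestronglyMeasurable_zero ?_
    have hle : ∀ m : ℕ, eLpNorm (T m - 0) 1 μ ≤ ENNReal.ofReal (4 * (m:ℝ)⁻¹) := fun m => by
      rw [sub_zero, eLpNorm_one_eq_lintegral_enorm, ]
      have hTi : Integrable (T m) μ := by
        simp only [hT, mul_pow]
        exact (hSS m).const_mul _
      rw [← ofReal_integral_norm_eq_lintegral_enorm hTi]
      apply ENNReal.ofReal_le_ofReal
      have : ∀ ω, ‖T m ω‖ = ((m:ℝ)⁻¹)^2 * S m ω ^ 2 := fun ω => by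
        simp only [hT]
        rw [Real.norm_of_nonneg (sq_nonneg _), mul_pow]
      simp_rw [this]
      rw [integral_const_mul]
      calc ((m:ℝ)⁻¹)^2 * ∫ ω, S m ω ^ 2 ∂μ ≤ ((m:ℝ)⁻¹)^2 * (4 * m) := by
            gcongr; exact hSbound m
        _ = 4 * (m:ℝ)⁻¹ := by
            rcases eq_or_ne (m:ℝ) 0 with h | h
            · simp [h]
            · field_simp
    refine tendsto_of_tendsto_of_tendsto_of_le_of_le tendsto_const_nhds ?_ (fun _ => zero_le) hle
    have : Tendsto (fun m : ℕ => 4 * (m:ℝ)⁻¹) atTop (nhds (4 * 0)) :=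
      (tendsto_inv_atTop_nhds_zero_nat).const_mul 4
    simpa using ENNReal.tendsto_ofReal this
  obtain ⟨φ, hφ, hφT⟩ := hTm.exists_seq_tendsto_ae
  refine ⟨φ, hφ, ?_⟩
  filter_upwards [hφT, hMconv] with ω h1 ⟨c, h2⟩
  refine ⟨0 + c, ?_⟩
  have h3 : Tendsto (fun j => (φ j : ℝ)⁻¹ * S (φ j) ω) atTop (nhds 0) := by
    have h4 := (Real.continuous_sqrt.tendsto _).comp h1
    simp only [Pi.zero_apply, Real.sqrt_zero] at h4
    rw [tendsto_zero_iff_abs_tendsto_zero]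
    refine h4.congr fun j => ?_
    simp [hT, Real.sqrt_sq_eq_abs]
  have h5 := h2.cesaro.comp hφ.tendsto_atTop
  refine (h3.add h5).congr fun j => ?_
  simp only [hS, hD, Function.comp, Pi.sub_apply, Finset.sum_sub_distrib]
  ring

/-- The left shift on sequences. -/
def auxShift {E : Type*} (x : ℕ → E) : ℕ → E := fun i => x (i + 1)

/-- The invariant sigma-field of the sequence. -/
@[reducible] def auxInv {Ω E : Type*} [MeasurableSpace E] (Y : ℕ → Ω → E) : MeasurableSpace Ω :=
  (MeasurableSpace.invariants (auxShift (E := E))).comap (fun ω i => Y i ω)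

/-- The natural (predictable) filtration. -/
def auxFil {Ω E : Type*} {mΩ : MeasurableSpace Ω} [MeasurableSpace E] (Y : ℕ → Ω → E)
    (hY : ∀ n, Measurable (Y n)) : Filtration ℕ mΩ where
  seq n := MeasurableSpace.comap (fun ω (i : Fin n) => Y i ω) inferInstance
  mono' := by
    intro m n hmn
    rintro _ ⟨C, hC, rfl⟩
    refine ⟨(fun (z : Fin n → E) (i : Fin m) => z (Fin.castLE hmn i)) ⁻¹' C, ?_, rfl⟩
    exact (by fun_prop : Measurable fun (z : Fin n → E) (i : Fin m) => z (Fin.castLE hmn i)) hC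
  le' n := by
    rw [← measurable_iff_comap_le]
    exact measurable_pi_lambda _ fun i => hY i

lemma auxInv_le {Ω E : Type*} {mΩ : MeasurableSpace Ω} [MeasurableSpace E] (Y : ℕ → Ω → E)
    (hY : ∀ n, Measurable (Y n)) : auxInv Y ≤ mΩ := by
  rintro _ ⟨B, hB, rfl⟩
  exact (measurable_pi_lambda _ hY : Measurable (fun ω i => Y i ω)) hB.1

/-- Limit of a subsequence of averages. -/
noncomputable def auxLim {E : Type*} (s : Set E) (φ : ℕ → ℕ) (x : ℕ → E) : ℝ :=
  limUnder atTop (fun j => (φ j : ℝ)⁻¹ * ∑ i ∈ Finset.range (φ j), s.indicator (fun _ => (1:ℝ)) (x i))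

lemma auxLim_shift {E : Type*} (s : Set E) (φ : ℕ → ℕ) (hφ : StrictMono φ) (x : ℕ → E) :
    auxLim s φ (auxShift x) = auxLim s φ x := by
  have key : Tendsto (fun j => (φ j : ℝ)⁻¹ * ∑ i ∈ Finset.range (φ j),
        s.indicator (fun _ => (1:ℝ)) (auxShift x i) - (φ j : ℝ)⁻¹ * ∑ i ∈ Finset.range (φ j),
        s.indicator (fun _ => (1:ℝ)) (x i)) atTop (nhds 0) := by
    have h0 : Tendsto (fun j => (φ j : ℝ)⁻¹) atTop (nhds 0) :=
      tendsto_inv_atTop_nhds_zero_nat.comp hφ.tendsto_atTop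
    refine squeeze_zero_norm (fun j => ?_) h0
    rw [← mul_sub, ← Finset.sum_sub_distrib]
    simp only [auxShift]
    rw [Finset.sum_range_sub (fun i => s.indicator (fun _ => (1:ℝ)) (x i)), norm_mul, norm_inv,
      Real.norm_natCast]
    apply mul_le_of_le_one_right (by positivity)
    rw [Real.norm_eq_abs, abs_le]
    classical
    simp only [Set.indicator_apply]
    split_ifs <;> norm_num
  unfold auxLim limUnder lim
  congr 1
  funext l
  apply propext
  constructor
  · intro h
    have h' : Tendsto _ _ _ := h
    have := h'.sub key
    simp only [sub_sub_cancel, sub_zero] at this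
    exact this
  · intro h
    have h' : Tendsto _ _ _ := h
    have := h'.add key
    simp only [add_sub_cancel, add_zero] at this
    exact this

lemma auxLim_meas {Ω E : Type*} [MeasurableSpace E] (Y : ℕ → Ω → E)
    (s : Set E) (hs : MeasurableSet s) (φ : ℕ → ℕ) (hφ : StrictMono φ) :
    StronglyMeasurable[auxInv Y] (fun ω => auxLim s φ (fun i => Y i ω)) := by
  have h1 : Measurable (auxLim s φ) := by
    refine (StronglyMeasurable.limUnder fun j => ?_).measurable
    refine Measurable.stronglyMeasurable ?_
    refine Measurable.const_mul ?_ _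
    refine Finset.measurable_fun_sum _ fun i _ => ?_
    exact (measurable_const.indicator hs).comp (measurable_pi_apply i)
  have h2 : Measurable[MeasurableSpace.invariants (auxShift (E := E))] (auxLim s φ) := by
    rw [MeasurableSpace.measurable_invariants_dom]
    refine ⟨h1, fun t _ => ?_⟩
    ext x
    simp [auxLim_shift s φ hφ]
  have h3 : Measurable[auxInv Y] (fun ω => auxLim s φ (fun i => Y i ω)) := by
    intro t ht
    exact ⟨_, h2 ht, rfl⟩
  exact Measurable.stronglyMeasurable (mα := auxInv Y) h3

section
variable {Ω E : Type*} {mΩ : MeasurableSpace Ω} [MeasurableSpace E]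

lemma aux_step (μ : Measure Ω) [IsProbabilityMeasure μ]
    (Y : ℕ → Ω → E) (hY : ∀ n, Measurable (Y n))
    (K : ∀ H, MeasurableSet[auxInv Y] H → ∀ n G, MeasurableSet[auxFil Y hY n] G →
      ∀ s, MeasurableSet s → μ.real (H ∩ G ∩ Y (n+1) ⁻¹' s) = μ.real (H ∩ G ∩ Y n ⁻¹' s))
    (s : Set E) (hs : MeasurableSet s) :
    ∃ V : Ω → ℝ, StronglyMeasurable[auxInv Y] V ∧ (∀ᵐ ω ∂μ, ‖V ω‖ ≤ 1) ∧
      ∀ n G, MeasurableSet[auxFil Y hY n] G →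
        μ[(G ∩ Y n ⁻¹' s).indicator (fun _ => (1:ℝ)) | auxInv Y] =ᵐ[μ]
          V * μ[G.indicator (fun _ => (1:ℝ)) | auxInv Y] := by
  set F := auxFil Y hY with hF
  have hI := auxInv_le Y hY
  set u : ℕ → Ω → ℝ := fun k => (Y k ⁻¹' s).indicator (fun _ => (1:ℝ)) with hu
  have hu1 : ∀ k ω, |u k ω| ≤ 1 := fun k ω => by
    classical
    simp only [hu, Set.indicator_apply]; split_ifs <;> simp
  have hsm : ∀ k, MeasurableSet (Y k ⁻¹' s) := fun k => hY k hs
  have hum : ∀ k, StronglyMeasurable[F (k+1)] (u k) := fun k => by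
    refine StronglyMeasurable.indicator stronglyMeasurable_const ?_
    exact ⟨(fun z : Fin (k+1) → E => z (Fin.last k)) ⁻¹' s, measurable_pi_apply _ hs, by
      ext ω; simp⟩
  have hum' : ∀ k, StronglyMeasurable (u k) := fun k => (hum k).mono (F.le _)
  have hui : ∀ k, Integrable (u k) μ := fun k =>
    Integrable.of_bound (hum' k).aestronglyMeasurable 1 (ae_of_all _ (hu1 k))
  have hset : ∀ k A, ∫ ω in A, u k ω ∂μ = μ.real (A ∩ Y k ⁻¹' s) := fun k A => by
    simp only [hu]
    rw [setIntegral_indicator (hsm k)]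
    simp
  have hc : ∀ k, μ[u (k+1) | F k] =ᵐ[μ] μ[u k | F k] := fun k => by
    refine ae_eq_condExp_of_forall_setIntegral_eq (F.le k) (hui k)
      (fun _ _ _ => integrable_condExp.integrableOn) (fun G hG _ => ?_)
      stronglyMeasurable_condExp.aestronglyMeasurable
    rw [setIntegral_condExp (F.le k) (hui _) hG, hset, hset]
    simpa using K Set.univ MeasurableSet.univ k G hG s hs
  obtain ⟨φ, hφ, hconv⟩ := aux_cesaro μ F u hu1 hum hc
  set V : Ω → ℝ := fun ω => auxLim s φ (fun i => Y i ω) with hV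
  set A : ℕ → Ω → ℝ := fun j ω => (φ j : ℝ)⁻¹ * ∑ i ∈ Finset.range (φ j), u i ω with hA
  have hVm : StronglyMeasurable[auxInv Y] V := auxLim_meas Y s hs φ hφ
  have hAV : ∀ᵐ ω ∂μ, Tendsto (fun j => A j ω) atTop (nhds (V ω)) := by
    filter_upwards [hconv] with ω hω
    exact tendsto_nhds_limUnder hω
  have hAb : ∀ j ω, ‖A j ω‖ ≤ 1 := fun j ω => by
    simp only [hA]
    rw [norm_mul, norm_inv, Real.norm_natCast]
    have : ‖∑ i ∈ Finset.range (φ j), u i ω‖ ≤ φ j := by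
      calc _ ≤ ∑ i ∈ Finset.range (φ j), ‖u i ω‖ := norm_sum_le _ _
        _ ≤ ∑ i ∈ Finset.range (φ j), 1 := Finset.sum_le_sum fun i _ => hu1 i ω
        _ = φ j := by simp
    exact inv_mul_le_one_of_le₀ this (by positivity)
  have hVb : ∀ᵐ ω ∂μ, ‖V ω‖ ≤ 1 := by
    filter_upwards [hAV] with ω hω
    exact le_of_tendsto hω.norm (Eventually.of_forall fun j => hAb j ω)
  refine ⟨V, hVm, hVb, fun n G hG => ?_⟩
  have hGm : MeasurableSet G := F.le n _ hG
  have hGi : Integrable (G.indicator (fun _ => (1:ℝ))) μ := (integrable_const _).indicator hGm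
  have hVG : Integrable (V * G.indicator (fun _ => (1:ℝ))) μ :=
    hGi.bdd_mul (c := 1) (hVm.mono hI).aestronglyMeasurable hVb
  refine EventuallyEq.trans ?_ (condExp_mul_of_stronglyMeasurable_left hVm hVG hGi)
  refine ae_eq_condExp_of_forall_setIntegral_eq hI hVG
      (fun _ _ _ => integrable_condExp.integrableOn) (fun H hH _ => ?_)
      stronglyMeasurable_condExp.aestronglyMeasurable
  have hHm : MeasurableSet H := hI _ hH
  rw [setIntegral_condExp hI ((integrable_const _).indicator (hGm.inter (hsm n))) hH]
  rw [setIntegral_indicator (hGm.inter (hsm n))]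
  have e1 : ∫ ω in H, (V * G.indicator (fun _ => (1:ℝ))) ω ∂μ = ∫ ω in H ∩ G, V ω ∂μ := by
    rw [← setIntegral_indicator hGm]
    congr 1
    funext ω
    by_cases h : ω ∈ G <;> simp [h]
  rw [e1]
  have hconst : ∀ k, n ≤ k → μ.real (H ∩ G ∩ Y k ⁻¹' s) = μ.real (H ∩ G ∩ Y n ⁻¹' s) := by
    intro k hk
    induction k, hk using Nat.le_induction with
    | base => rfl
    | succ k hk ih => rw [K H hH k G (F.mono hk _ hG) s hs, ih]
  have t1 : Tendsto (fun k => ∫ ω in H ∩ G, u k ω ∂μ) atTop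
      (nhds (μ.real (H ∩ G ∩ Y n ⁻¹' s))) := by
    refine tendsto_const_nhds.congr' ?_
    filter_upwards [eventually_ge_atTop n] with k hk
    rw [hset, hconst k hk]
  have t2 := t1.cesaro.comp hφ.tendsto_atTop
  have t3 : Tendsto (fun j => ∫ ω in H ∩ G, A j ω ∂μ) atTop (nhds (∫ ω in H ∩ G, V ω ∂μ)) := by
    refine tendsto_integral_of_dominated_convergence (fun _ => 1) (fun j => ?_)
      (integrable_const _) (fun j => ae_of_all _ (hAb j)) (ae_restrict_of_ae hAV)
    refine StronglyMeasurable.aestronglyMeasurable ?_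
    exact (Finset.stronglyMeasurable_fun_sum _ fun i _ => hum' i).const_mul _
  have t4 : (fun j => ∫ ω in H ∩ G, A j ω ∂μ) =
      (fun m : ℕ => (m⁻¹ : ℝ) * ∑ i ∈ Finset.range m, ∫ ω in H ∩ G, u i ω ∂μ) ∘ φ := by
    funext j
    simp only [hA, Function.comp]
    rw [integral_const_mul, integral_finsetSum _ fun i _ => (hui i).integrableOn]
  rw [t4] at t3
  rw [tendsto_nhds_unique t3 t2]
  simp [Set.inter_assoc]

lemma aux_prod (μ : Measure Ω) [IsProbabilityMeasure μ]
    (Y : ℕ → Ω → E) (hY : ∀ n, Measurable (Y n))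
    (V : Set E → Ω → ℝ)
    (hV : ∀ s, MeasurableSet s → ∀ n G, MeasurableSet[auxFil Y hY n] G →
        μ[(G ∩ Y n ⁻¹' s).indicator (fun _ => (1:ℝ)) | auxInv Y] =ᵐ[μ]
          V s * μ[G.indicator (fun _ => (1:ℝ)) | auxInv Y])
    (n : ℕ) (t : Fin n → Set E) (ht : ∀ i, MeasurableSet (t i)) :
    μ[{ω | ∀ i : Fin n, Y i ω ∈ t i}.indicator (fun _ => (1:ℝ)) | auxInv Y] =ᵐ[μ]
      fun ω => ∏ i, V (t i) ω := by
  induction n with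
  | zero =>
    have : {ω : Ω | ∀ i : Fin 0, Y i ω ∈ t i} = Set.univ := by ext; simp
    rw [this, Set.indicator_univ, condExp_const (auxInv_le Y hY)]
    simp
  | succ n ih =>
    have e : {ω : Ω | ∀ i : Fin (n+1), Y i ω ∈ t i} =
        {ω | ∀ i : Fin n, Y i ω ∈ t i.castSucc} ∩ Y n ⁻¹' (t (Fin.last n)) := by
      ext ω
      simp [Fin.forall_fin_succ']
    rw [e]
    have hG : MeasurableSet[auxFil Y hY n] {ω | ∀ i : Fin n, Y i ω ∈ t i.castSucc} := by
      refine ⟨Set.univ.pi fun i : Fin n => t i.castSucc,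
        MeasurableSet.univ_pi fun i => ht _, ?_⟩
      ext ω; simp
    filter_upwards [hV _ (ht (Fin.last n)) n _ hG, ih (fun i => t i.castSucc) fun i => ht _]
      with ω h1 h2
    rw [h1, Pi.mul_apply, h2, Fin.prod_univ_castSucc, mul_comm]

lemma aux_exch (μ : Measure Ω) [IsProbabilityMeasure μ]
    (Y : ℕ → Ω → E) (hY : ∀ n, Measurable (Y n))
    (K : ∀ H, MeasurableSet[auxInv Y] H → ∀ n G, MeasurableSet[auxFil Y hY n] G →
      ∀ s, MeasurableSet s → μ.real (H ∩ G ∩ Y (n+1) ⁻¹' s) = μ.real (H ∩ G ∩ Y n ⁻¹' s))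
    (n : ℕ) (σ : Equiv.Perm (Fin n)) :
    Measure.map (fun ω (i : Fin n) => Y (σ i) ω) μ = Measure.map (fun ω (i : Fin n) => Y i ω) μ := by
  choose! V hVm hVb hV using aux_step μ Y hY K
  have hI := auxInv_le Y hY
  have hm : ∀ τ : Equiv.Perm (Fin n), Measurable (fun ω (i : Fin n) => Y (τ i) ω) := fun τ =>
    measurable_pi_lambda _ fun i => hY _
  have hm1 : Measurable (fun ω (i : Fin n) => Y i ω) := measurable_pi_lambda _ fun i => hY _
  have key : ∀ t : Fin n → Set E, (∀ i, MeasurableSet (t i)) →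
      μ.real {ω | ∀ i : Fin n, Y i ω ∈ t i} = ∫ ω, ∏ i, V (t i) ω ∂μ := by
    intro t ht
    have hms : MeasurableSet {ω | ∀ i : Fin n, Y i ω ∈ t i} := by
      have : {ω | ∀ i : Fin n, Y i ω ∈ t i} = ⋂ i : Fin n, Y i ⁻¹' t i := by ext; simp
      rw [this]
      exact MeasurableSet.iInter fun i => hY _ (ht i)
    rw [← integral_congr_ae (aux_prod μ Y hY V hV n t ht), integral_condExp hI]
    rw [integral_indicator hms]
    simp
  have := Measure.isFiniteMeasure_map μ (fun ω (i : Fin n) => Y (σ i) ω)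
  refine ext_of_generate_finite _ generateFrom_pi.symm isPiSystem_pi ?_ ?_
  · rintro _ ⟨t, ht, rfl⟩
    have ht' : ∀ i, MeasurableSet (t i) := fun i => ht i trivial
    have hpi : MeasurableSet (Set.univ.pi t) := MeasurableSet.univ_pi ht'
    rw [Measure.map_apply (hm σ) hpi, Measure.map_apply hm1 hpi]
    have e1 : (fun ω (i : Fin n) => Y (σ i) ω) ⁻¹' Set.univ.pi t =
        {ω | ∀ i : Fin n, Y i ω ∈ t (σ.symm i)} := by
      ext ω
      simp only [Set.mem_preimage, Set.mem_univ_pi, Set.mem_ofPred_eq]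
      constructor
      · intro h i; simpa using h (σ.symm i)
      · intro h i; simpa using h (σ i)
    have e2 : (fun ω (i : Fin n) => Y i ω) ⁻¹' Set.univ.pi t =
        {ω | ∀ i : Fin n, Y i ω ∈ t i} := by
      ext ω; simp
    rw [e1, e2, ← measureReal_eq_measureReal_iff, key _ fun i => ht' _, key _ ht']
    congr 1
    funext ω
    exact Equiv.prod_comp σ.symm (fun i => V (t i) ω)
  · rw [Measure.map_apply (hm σ) .univ, Measure.map_apply hm1 .univ]
    simp
end

/-- If `(X n)` is c.i.d. under `P(·|H)` for every event `H` of positive probability in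
the shift-invariant σ-field of `(X n)`, then `(X n)` is exchangeable. -/
theorem stmt16 {Ω E : Type*} {mΩ : MeasurableSpace Ω}
    [TopologicalSpace E] [PolishSpace E] [MeasurableSpace E] [BorelSpace E]
    (μ : Measure Ω) [IsProbabilityMeasure μ] (X : ℕ → Ω → E)
    (hX : ∀ n, Measurable (X n))
    (h : ∀ B : Set (ℕ → E), MeasurableSet B →
      (∀ x : ℕ → E, x ∈ B ↔ (fun i => x (i + 1)) ∈ B) →
      μ ((fun ω (i : ℕ) => X (i + 1) ω) ⁻¹' B) ≠ 0 →
      IsCIDnat (μ[|(fun ω (i : ℕ) => X (i + 1) ω) ⁻¹' B]) X) :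
    IsExchangeable μ X := by
  have hY : ∀ n, Measurable ((fun k => X (k + 1)) n) := fun n => hX _
  refine fun n σ => aux_exch μ (fun k => X (k + 1)) hY ?_ n σ
  rintro H ⟨B, hB, rfl⟩ n G ⟨C, hC, rfl⟩ s hs
  have hBm : MeasurableSet B := hB.1
  have hBi : ∀ x : ℕ → E, x ∈ B ↔ (fun i => x (i + 1)) ∈ B := fun x => by
    have := Set.ext_iff.1 hB.2 x
    exact this.symm
  have hHm : MeasurableSet ((fun ω (i : ℕ) => X (i + 1) ω) ⁻¹' B) :=
    (measurable_pi_lambda _ hY : Measurable (fun ω i => X (i + 1) ω)) hBm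
  by_cases h0 : μ ((fun ω (i : ℕ) => X (i + 1) ω) ⁻¹' B) = 0
  · have z : ∀ A₁ A₂ : Set Ω, μ.real ((fun ω (i : ℕ) => X (i + 1) ω) ⁻¹' B ∩ A₁ ∩ A₂) = 0 := by
      intro A₁ A₂
      rw [measureReal_def, measure_mono_null (fun ω hω => hω.1.1) h0]
      simp
    rw [z, z]
  · have hcid := h B hBm hBi h0 n
    set S : Set (Fin (n+1) → E) :=
      ((fun z (i : Fin n) => z i.castSucc) ⁻¹' C) ∩ ((fun z => z (Fin.last n)) ⁻¹' s) with hS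
    have hSm : MeasurableSet S := by
      refine MeasurableSet.inter ?_ (measurable_pi_apply _ hs)
      exact (by fun_prop :
        Measurable (fun (z : Fin (n+1) → E) (i : Fin n) => z i.castSucc)) hC
    have hev := congrArg (fun ν => ν S) hcid
    rw [Measure.map_apply _ hSm, Measure.map_apply _ hSm, cond_apply hHm, cond_apply hHm] at hev
    · have hne : (μ ((fun ω (i : ℕ) => X (i + 1) ω) ⁻¹' B))⁻¹ ≠ 0 :=
        ENNReal.inv_ne_zero.2 (measure_ne_top _ _)
      have hnt : (μ ((fun ω (i : ℕ) => X (i + 1) ω) ⁻¹' B))⁻¹ ≠ ⊤ := ENNReal.inv_ne_top.2 h0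
      rw [ENNReal.mul_right_inj hne hnt] at hev
      rw [measureReal_def, measureReal_def, Set.inter_assoc, Set.inter_assoc]
      congr 1
      convert hev using 3
      · ext ω
        simp [hS]
      · ext ω
        simp [hS]
    · exact measurable_pi_lambda _ fun i => hX _
    · refine measurable_pi_lambda _ fun i => ?_
      split_ifs <;> exact hX _
end
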